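/- arXiv:2102.04397 — 9 statements merged into one kernel-verified Lean document; each statement's English description precedes it below -/
import Mathlib

section
/- (Large deviations upper bound.) For every compact set C ⊂ X×Y, limsup_{ε→0} ε log π_ε(C) ≤ −inf_{(x,y)∈C} I(x,y). -/
open MeasureTheory Filter Topology Set
open scoped ENNReal

noncomputable section

namespace EOT

variable {X Y : Type*}

/-- A coupling of `μ` and `ν`: a probability measure on the product with the given marginals. -/
def IsCoupling [MeasurableSpace X] [MeasurableSpace Y]
    (μ : Measure X) (ν : Measure Y) (π : Measure (X × Y)) : Prop :=
  IsProbabilityMeasure π ∧ π.map Prod.fst = μ ∧ π.map Prod.snd = ν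

/-- `(c,ε)`-cyclical invariance: `π` is equivalent to `P = μ ⊗ ν`, with a positive version of the
density satisfying the cyclical identity for all `k` points. -/
def IsCyclInvariant [MeasurableSpace X] [MeasurableSpace Y]
    (c : X → Y → ℝ) (ε : ℝ) (μ : Measure X) (ν : Measure Y)
    (π : Measure (X × Y)) : Prop :=
  IsCoupling μ ν π ∧
  ∃ D : X × Y → ℝ, Measurable D ∧ (∀ z, 0 < D z) ∧
    π = (μ.prod ν).withDensity (fun z => ENNReal.ofReal (D z)) ∧
    ∀ (k : ℕ) (x : Fin (k + 1) → X) (y : Fin (k + 1) → Y),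
      (∏ i, D (x i, y i)) =
        Real.exp (-(1 / ε) * ((∑ i, c (x i) (y i)) - ∑ i, c (x i) (y (i + 1)))) *
        ∏ i, D (x i, y (i + 1))

/-- Topological support of a measure. -/
def mSupport {Z : Type*} [TopologicalSpace Z] [MeasurableSpace Z] (π : Measure Z) : Set Z :=
  {z | ∀ U : Set Z, IsOpen U → z ∈ U → 0 < π U}

/-- Weak convergence `π ε → π₀` as `ε → 0⁺`, tested against bounded continuous functions. -/
def TendstoWeakly {Z : Type*} [TopologicalSpace Z] [MeasurableSpace Z]
    (π : ℝ → Measure Z) (π₀ : Measure Z) : Prop :=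
  ∀ f : BoundedContinuousFunction Z ℝ,
    Tendsto (fun ε => ∫ z, f z ∂(π ε)) (𝓝[>] (0 : ℝ)) (𝓝 (∫ z, f z ∂π₀))

/-- `c`-cyclical monotonicity of a set `Γ ⊆ X × Y`. -/
def CCyclMonotone (c : X → Y → ℝ) (Γ : Set (X × Y)) : Prop :=
  ∀ (k : ℕ) (p : Fin (k + 1) → X × Y), (∀ i, p i ∈ Γ) →
    (∑ i, c (p i).1 (p i).2) ≤ ∑ i, c (p i).1 (p (i + 1)).2

/-- The rate function `I(x,y)`: supremum over `k ≥ 2`, points `(x_i,y_i)_{i=2}^k ⊆ Γ`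
(the first point being `z`) and permutations `σ` of the cost difference. -/
def rateI (c : X → Y → ℝ) (Γ : Set (X × Y)) (z : X × Y) : EReal :=
  ⨆ (k : ℕ) (p : Fin (k + 2) → X × Y) (_ : p 0 = z) (_ : ∀ i, i ≠ 0 → p i ∈ Γ)
    (σ : Equiv.Perm (Fin (k + 2))),
    (((∑ i, c (p i).1 (p i).2) - ∑ i, c (p i).1 (p (σ i)).2 : ℝ) : EReal)

/-- The variant of the rate function using only the cyclic shift. -/
def rateICyc (c : X → Y → ℝ) (Γ : Set (X × Y)) (z : X × Y) : EReal :=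
  ⨆ (k : ℕ) (p : Fin (k + 2) → X × Y) (_ : p 0 = z) (_ : ∀ i, i ≠ 0 → p i ∈ Γ),
    (((∑ i, c (p i).1 (p i).2) - ∑ i, c (p i).1 (p (i + 1)).2 : ℝ) : EReal)

open scoped Classical in
/-- Relative entropy (Kullback–Leibler divergence) `H(π|R)`, valued in `EReal`. -/
def relEntropy {Z : Type*} [MeasurableSpace Z] (π R : Measure Z) : EReal :=
  if π ≪ R ∧ Integrable (fun z => Real.log (π.rnDeriv R z).toReal) π
  then ((∫ z, Real.log (π.rnDeriv R z).toReal ∂π : ℝ) : EReal)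
  else ⊤

/-- Transport cost `∫ c dπ` (as a lower integral). -/
def transportCost [MeasurableSpace X] [MeasurableSpace Y]
    (c : X → Y → ℝ) (π : Measure (X × Y)) : ℝ≥0∞ :=
  ∫⁻ z, ENNReal.ofReal (c z.1 z.2) ∂π

/-- Entropic optimal transport objective `∫ c dπ + ε H(π|μ⊗ν)`. -/
def eotObj [MeasurableSpace X] [MeasurableSpace Y]
    (c : X → Y → ℝ) (ε : ℝ) (μ : Measure X) (ν : Measure Y) (π : Measure (X × Y)) : EReal :=
  (transportCost c π : EReal) + (ε : EReal) * relEntropy π (μ.prod ν)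

/-- The `c`-conjugate `ψ^c(y) = inf_x [ψ(x) + c(x,y)]`. -/
def cConj (c : X → Y → ℝ) (ψ : X → EReal) (y : Y) : EReal :=
  ⨅ x, ψ x + (c x y : EReal)

/-- A proper `c`-convex function `ψ(x) = sup_y [ζ(y) − c(x,y)]`. -/
def IsCConvex (c : X → Y → ℝ) (ψ : X → EReal) : Prop :=
  (∀ x, ψ x ≠ ⊥) ∧ (∃ x, ψ x ≠ ⊤) ∧
  ∃ ζ : Y → EReal, ∀ x, ψ x = ⨆ y, ζ y - (c x y : EReal)

/-- The `c`-subdifferential `∂_c ψ = {(x,y) : ψ^c(y) − ψ(x) = c(x,y)}`. -/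
def cSubdiff (c : X → Y → ℝ) (ψ : X → EReal) : Set (X × Y) :=
  {p | cConj c ψ p.2 - ψ p.1 = (c p.1 p.2 : EReal)}

/-- A Kantorovich potential for `Γ`: a `c`-convex `ψ` with `Γ ⊆ ∂_c ψ`. -/
def IsKantorovichPotential (c : X → Y → ℝ) (Γ : Set (X × Y)) (ψ : X → EReal) : Prop :=
  IsCConvex c ψ ∧ Γ ⊆ cSubdiff c ψ

/-- Uniqueness of Kantorovich potentials on a set `Λ ⊆ X`. -/
def UniquenessOfPotentials (c : X → Y → ℝ) (Γ : Set (X × Y)) (Λ : Set X) : Prop :=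
  ∀ ψ₁ ψ₂ : X → EReal, IsKantorovichPotential c Γ ψ₁ → IsKantorovichPotential c Γ ψ₂ →
    ∀ x ∈ Λ, ∀ x' ∈ Λ, ψ₁ x - ψ₂ x = ψ₁ x' - ψ₂ x'

/-- The Rockafellar antiderivative `ψ_{(x₀,y₀)}` of `Γ`. -/
def rockafellar (c : X → Y → ℝ) (Γ : Set (X × Y)) (z₀ : X × Y) (x : X) : EReal :=
  ⨆ (k : ℕ) (p : Fin (k + 1) → X × Y) (_ : ∀ i, p i ∈ Γ),
    ((c z₀.1 z₀.2 - c (p 0).1 z₀.2 +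
        ∑ i : Fin (k + 1),
          (c (p i).1 (p i).2 -
            c (if h : (i : ℕ) + 1 < k + 1 then (p ⟨(i : ℕ) + 1, h⟩).1 else x) (p i).2) : ℝ) : EReal)

/-- Factorization of the density. -/
theorem density_factor [MeasurableSpace X] [MeasurableSpace Y]
    (c : X → Y → ℝ) (hcm : Measurable fun p : X × Y => c p.1 p.2) (ε : ℝ)
    (D : X × Y → ℝ) (hDm : Measurable D) (hD0 : ∀ z, 0 < D z)
    (hD : ∀ (k : ℕ) (x : Fin (k + 1) → X) (y : Fin (k + 1) → Y),
      (∏ i, D (x i, y i)) =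
        Real.exp (-(1 / ε) * ((∑ i, c (x i) (y i)) - ∑ i, c (x i) (y (i + 1)))) *
        ∏ i, D (x i, y (i + 1))) (z : X × Y) :
    ∃ f : X → ℝ, ∃ g : Y → ℝ, Measurable f ∧ Measurable g ∧ (∀ x, 0 ≤ f x) ∧ (∀ y, 0 ≤ g y) ∧
      ∀ x y, D (x, y) = Real.exp (-(c x y) / ε) * (f x * g y) := by
  refine ⟨fun x => D (x, z.2) * Real.exp (c x z.2 / ε),
    fun y => D (z.1, y) * Real.exp (c z.1 y / ε) * (Real.exp (-(c z.1 z.2) / ε) / D z),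
    ?_, ?_, ?_, ?_, ?_⟩
  · have h1 : Measurable fun x : X => (x, z.2) := by fun_prop
    exact (hDm.comp h1).mul (Real.measurable_exp.comp ((hcm.comp h1).div_const ε))
  · have h1 : Measurable fun y : Y => (z.1, y) := by fun_prop
    exact ((hDm.comp h1).mul (Real.measurable_exp.comp ((hcm.comp h1).div_const ε))).mul_const _
  · intro x
    have := hD0 (x, z.2)
    positivity
  · intro y
    have := hD0 (z.1, y)
    have := hD0 z
    positivity
  · intro x y
    have h := hD 1 ![x, z.1] ![y, z.2]
    simp [Fin.prod_univ_two, Fin.sum_univ_two] at h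
    have hz := hD0 z
    have e : Real.exp (-(ε⁻¹ * (c x y + c z.1 z.2 - (c x z.2 + c z.1 y)))) =
      Real.exp (-(c x y) / ε) * Real.exp (c x z.2 / ε) * Real.exp (c z.1 y / ε)
        * Real.exp (-(c z.1 z.2) / ε) := by
      rw [← Real.exp_add, ← Real.exp_add, ← Real.exp_add]
      congr 1
      ring
    rw [e] at h
    have h2 : D (x, y) = (D (x, y) * D z) / D z := by field_simp
    rw [h2, h]
    ring

/-- Bounds for the mass of a box on which the cost is nearly constant. -/
theorem box_bounds [MeasurableSpace X] [MeasurableSpace Y]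
    (μ : Measure X) (ν : Measure Y) [IsProbabilityMeasure μ] [IsProbabilityMeasure ν]
    (c : X → Y → ℝ) (ε : ℝ) (hε : 0 < ε)
    (D : X × Y → ℝ) (f : X → ℝ) (g : Y → ℝ) (hf : Measurable f) (hg : Measurable g)
    (hf0 : ∀ x, 0 ≤ f x) (hg0 : ∀ y, 0 ≤ g y)
    (hD : ∀ x y, D (x, y) = Real.exp (-(c x y) / ε) * (f x * g y))
    (A : Set X) (B : Set Y) (hA : MeasurableSet A) (hB : MeasurableSet B) (c0 δ : ℝ)
    (hcd : ∀ x ∈ A, ∀ y ∈ B, |c x y - c0| ≤ δ) :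
    (μ.prod ν).withDensity (fun z => ENNReal.ofReal (D z)) (A ×ˢ B) ≤
      ENNReal.ofReal (Real.exp ((δ - c0) / ε)) *
        ((∫⁻ x in A, ENNReal.ofReal (f x) ∂μ) * ∫⁻ y in B, ENNReal.ofReal (g y) ∂ν) ∧
    ENNReal.ofReal (Real.exp ((-δ - c0) / ε)) *
        ((∫⁻ x in A, ENNReal.ofReal (f x) ∂μ) * ∫⁻ y in B, ENNReal.ofReal (g y) ∂ν) ≤
      (μ.prod ν).withDensity (fun z => ENNReal.ofReal (D z)) (A ×ˢ B) := by
  have key : ∀ r : ℝ, ENNReal.ofReal (Real.exp r) *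
      ((∫⁻ x in A, ENNReal.ofReal (f x) ∂μ) * ∫⁻ y in B, ENNReal.ofReal (g y) ∂ν) =
      ∫⁻ z in A ×ˢ B, ENNReal.ofReal (Real.exp r * (f z.1 * g z.2)) ∂(μ.prod ν) := by
    intro r
    rw [← lintegral_prod_mul (by fun_prop) (by fun_prop), ← lintegral_const_mul _ (by fun_prop),
      ← Measure.prod_restrict]
    refine lintegral_congr fun z => ?_
    rw [ENNReal.ofReal_mul (Real.exp_pos _).le, ENNReal.ofReal_mul (hf0 _)]
  rw [key, key, withDensity_apply _ (hA.prod hB)]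
  constructor
  · refine setLIntegral_mono' (hA.prod hB) fun z hz => ENNReal.ofReal_le_ofReal ?_
    have h := abs_le.1 (hcd z.1 hz.1 z.2 hz.2)
    rw [show D z = _ from hD z.1 z.2]
    refine mul_le_mul_of_nonneg_right (Real.exp_le_exp.2 ?_) (mul_nonneg (hf0 _) (hg0 _))
    gcongr
    linarith [h.1]
  · refine setLIntegral_mono' (hA.prod hB) fun z hz => ENNReal.ofReal_le_ofReal ?_
    have h := abs_le.1 (hcd z.1 hz.1 z.2 hz.2)
    rw [show D z = _ from hD z.1 z.2]
    refine mul_le_mul_of_nonneg_right (Real.exp_le_exp.2 ?_) (mul_nonneg (hf0 _) (hg0 _))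
    gcongr
    linarith [h.2]

/-- Product bound for boxes. -/
theorem prod_box_le [MeasurableSpace X] [MeasurableSpace Y]
    (μ : Measure X) (ν : Measure Y) [IsProbabilityMeasure μ] [IsProbabilityMeasure ν]
    (c : X → Y → ℝ) (hcm : Measurable fun p : X × Y => c p.1 p.2) (ε : ℝ) (hε : 0 < ε)
    (π : Measure (X × Y)) (hπ : IsCyclInvariant c ε μ ν π) (n : ℕ) (p : Fin (n + 1) → X × Y)
    (σ : Equiv.Perm (Fin (n + 1))) (A : Fin (n + 1) → Set X) (B : Fin (n + 1) → Set Y)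
    (hA : ∀ i, MeasurableSet (A i)) (hB : ∀ i, MeasurableSet (B i)) (δ a : ℝ)
    (hcd : ∀ i j, ∀ x ∈ A i, ∀ y ∈ B j, |c x y - c (p i).1 (p j).2| ≤ δ)
    (ha : a + 2 * (n + 1) * δ ≤ (∑ i, c (p i).1 (p i).2) - ∑ i, c (p i).1 (p (σ i)).2) :
    ∏ i, π (A i ×ˢ B i) ≤ ENNReal.ofReal (Real.exp (-a / ε)) := by
  obtain ⟨⟨hprob, -, -⟩, D, hDm, hD0, hπD, hD⟩ := hπ
  obtain ⟨f, g, hf, hg, hf0, hg0, hfg⟩ := density_factor c hcm ε D hDm hD0 hD (p 0)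
  have hb := fun i j => box_bounds μ ν c ε hε D f g hf hg hf0 hg0 hfg (A i) (B j) (hA i) (hB j)
    (c (p i).1 (p j).2) δ (hcd i j)
  rw [← hπD] at hb
  set F : Fin (n + 1) → ℝ≥0∞ := fun i => ∫⁻ x in A i, ENNReal.ofReal (f x) ∂μ with hF
  set G : Fin (n + 1) → ℝ≥0∞ := fun i => ∫⁻ x in B i, ENNReal.ofReal (g x) ∂ν with hG
  set Q : ℝ≥0∞ := (∏ i, F i) * ∏ i, G i with hQ
  have h1 : ∏ i, π (A i ×ˢ B i) ≤
      ENNReal.ofReal (Real.exp (∑ i, (δ - c (p i).1 (p i).2) / ε)) * Q := by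
    refine (Finset.prod_le_prod' fun i _ => (hb i i).1).trans_eq ?_
    rw [Finset.prod_mul_distrib, Finset.prod_mul_distrib, Real.exp_sum,
      ENNReal.ofReal_prod_of_nonneg (fun i _ => (Real.exp_pos _).le)]
  have h2 : ENNReal.ofReal (Real.exp (∑ i, (-δ - c (p i).1 (p (σ i)).2) / ε)) * Q ≤ 1 := by
    have : ∏ i, π (A i ×ˢ B (σ i)) ≤ 1 := Finset.prod_le_one' fun i _ => prob_le_one
    refine le_trans ?_ this
    refine le_trans (le_of_eq ?_) (Finset.prod_le_prod' fun i _ => (hb i (σ i)).2)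
    rw [Finset.prod_mul_distrib, Finset.prod_mul_distrib, Real.exp_sum,
      ENNReal.ofReal_prod_of_nonneg (fun i _ => (Real.exp_pos _).le), hQ, Equiv.prod_comp σ G]
  have h3 : Real.exp (∑ i, (δ - c (p i).1 (p i).2) / ε) ≤
      Real.exp (-a / ε) * Real.exp (∑ i, (-δ - c (p i).1 (p (σ i)).2) / ε) := by
    rw [← Real.exp_add]
    refine Real.exp_le_exp.2 ?_
    rw [← Finset.sum_div, ← Finset.sum_div, ← add_div]
    gcongr
    simp only [Finset.sum_sub_distrib, Finset.sum_const, Finset.card_univ, Fintype.card_fin,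
      nsmul_eq_mul]
    push_cast
    linarith
  calc _ ≤ _ := h1
    _ ≤ ENNReal.ofReal (Real.exp (-a / ε)) *
        (ENNReal.ofReal (Real.exp (∑ i, (-δ - c (p i).1 (p (σ i)).2) / ε)) * Q) := by
      rw [← mul_assoc (ENNReal.ofReal (Real.exp (-a / ε))),
        ← ENNReal.ofReal_mul (Real.exp_pos _).le]
      gcongr
    _ ≤ ENNReal.ofReal (Real.exp (-a / ε)) * 1 := by gcongr
    _ = _ := mul_one _

section Aux

variable {X Y : Type*}
  [MeasurableSpace X] [MetricSpace X] [PolishSpace X] [BorelSpace X]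
  [MeasurableSpace Y] [MetricSpace Y] [PolishSpace Y] [BorelSpace Y]

theorem weak_open {Z : Type*} [MeasurableSpace Z] [MetricSpace Z] [BorelSpace Z]
    (π : ℝ → Measure Z) [∀ ε, IsProbabilityMeasure (π ε)] (πs : Measure Z)
    [IsProbabilityMeasure πs] (h : TendstoWeakly π πs) (U : Set Z) (hU : IsOpen U)
    (h0 : 0 < πs U) : ∃ m : ℝ, 0 < m ∧ ∀ᶠ ε in 𝓝[>] (0 : ℝ), ENNReal.ofReal m ≤ π ε U := by
  let P : ℝ → ProbabilityMeasure Z := fun ε => ⟨π ε, inferInstance⟩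
  let P0 : ProbabilityMeasure Z := ⟨πs, inferInstance⟩
  have ht : Tendsto P (𝓝[>] (0 : ℝ)) (𝓝 P0) :=
    ProbabilityMeasure.tendsto_iff_forall_integral_tendsto.2 h
  have hl := ProbabilityMeasure.le_liminf_measure_open_of_tendsto ht hU
  obtain ⟨m, hm0, hm⟩ := ENNReal.lt_iff_exists_real_btwn.1 h0
  refine ⟨m, ENNReal.ofReal_pos.1 hm.1, ?_⟩
  filter_upwards [eventually_lt_of_lt_liminf (lt_of_lt_of_le hm.2 hl)] with ε hε
  exact hε.le

theorem exists_radius (c : X → Y → ℝ) (hc : Continuous fun p : X × Y => c p.1 p.2)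
    (n : ℕ) (p : Fin n → X × Y) (δ : ℝ) (hδ : 0 < δ) :
    ∃ r : ℝ, 0 < r ∧ ∀ i j, ∀ x ∈ Metric.ball (p i).1 r, ∀ y ∈ Metric.ball (p j).2 r,
      |c x y - c (p i).1 (p j).2| ≤ δ := by
  have : ∀ᶠ r in 𝓝[>] (0 : ℝ), ∀ i j, ∀ x ∈ Metric.ball (p i).1 r, ∀ y ∈ Metric.ball (p j).2 r,
      |c x y - c (p i).1 (p j).2| ≤ δ := by
    refine eventually_all.2 fun i => eventually_all.2 fun j => ?_
    obtain ⟨r, hr, h⟩ := Metric.continuous_iff.1 hc ((p i).1, (p j).2) δ hδ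
    filter_upwards [Ioo_mem_nhdsGT hr] with s hs x hx y hy
    have := h (x, y) (by
      rw [Prod.dist_eq]
      exact max_lt ((Metric.mem_ball.1 hx).trans hs.2) ((Metric.mem_ball.1 hy).trans hs.2))
    rw [Real.dist_eq] at this
    exact this.le
  obtain ⟨r, h1, h2⟩ := (this.and self_mem_nhdsWithin).exists
  exact ⟨r, h2, h1⟩

theorem local_bound (μ : Measure X) (ν : Measure Y)
    [IsProbabilityMeasure μ] [IsProbabilityMeasure ν]
    (c : X → Y → ℝ) (hc : Continuous fun p : X × Y => c p.1 p.2)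
    (πε : ℝ → Measure (X × Y)) [∀ ε, IsProbabilityMeasure (πε ε)]
    (hπε : ∀ ε, 0 < ε → IsCyclInvariant c ε μ ν (πε ε))
    (πs : Measure (X × Y)) [IsProbabilityMeasure πs] (hconv : TendstoWeakly πε πs)
    (z : X × Y) (a : ℝ) (ha : (a : EReal) < rateI c (mSupport πs) z) :
    ∃ U ∈ 𝓝 z, ∃ K : ℝ, 0 < K ∧ ∀ᶠ ε in 𝓝[>] (0 : ℝ),
      πε ε U ≤ ENNReal.ofReal (K * Real.exp (-a / ε)) := by
  simp only [rateI, lt_iSup_iff] at ha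
  obtain ⟨k, p, hp0, hpΓ, σ, ha⟩ := ha
  rw [EReal.coe_lt_coe_iff] at ha
  set S : ℝ := (∑ i, c (p i).1 (p i).2) - ∑ i, c (p i).1 (p (σ i)).2 with hS
  have hn : (0 : ℝ) < 2 * ((k + 1 : ℕ) + 1) := by positivity
  obtain ⟨r, hr, hcd⟩ := exists_radius c hc (k + 2) p ((S - a) / (2 * ((k + 1 : ℕ) + 1)))
    (div_pos (sub_pos.2 ha) hn)
  set V : Fin (k + 2) → Set (X × Y) :=
    fun i => Metric.ball (p i).1 r ×ˢ Metric.ball (p i).2 r with hV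
  have hVo : ∀ i, IsOpen (V i) := fun i => Metric.isOpen_ball.prod Metric.isOpen_ball
  have hVm : ∀ i, p i ∈ V i := fun i => ⟨Metric.mem_ball_self hr, Metric.mem_ball_self hr⟩
  have hm : ∀ i : Fin (k + 1), ∃ m : ℝ, 0 < m ∧
      ∀ᶠ ε in 𝓝[>] (0 : ℝ), ENNReal.ofReal m ≤ πε ε (V i.succ) := fun i =>
    weak_open πε πs hconv _ (hVo _) (hpΓ i.succ (Fin.succ_ne_zero i) _ (hVo _) (hVm _))
  choose m hm0 hm using hm
  have hM : 0 < ∏ i, m i := Finset.prod_pos fun i _ => hm0 i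
  refine ⟨V 0, (hVo 0).mem_nhds (hp0 ▸ hVm 0), (∏ i, m i)⁻¹, inv_pos.2 hM, ?_⟩
  filter_upwards [eventually_all.2 hm, self_mem_nhdsWithin] with ε hε hε0
  have h := prod_box_le μ ν c hc.measurable ε hε0 (πε ε) (hπε ε hε0) (k + 1) p σ
    (fun i => Metric.ball (p i).1 r) (fun i => Metric.ball (p i).2 r)
    (fun i => measurableSet_ball) (fun i => measurableSet_ball) _ a hcd (by
      rw [mul_div_cancel₀ _ hn.ne']
      linarith)
  rw [Fin.prod_univ_succ] at h
  have h2 : ENNReal.ofReal (∏ i, m i) ≤ ∏ i : Fin (k + 1), πε ε (V i.succ) := by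
    rw [ENNReal.ofReal_prod_of_nonneg fun i _ => (hm0 i).le]
    exact Finset.prod_le_prod' fun i _ => hε i
  have h3 : πε ε (V 0) * ENNReal.ofReal (∏ i, m i) ≤ ENNReal.ofReal (Real.exp (-a / ε)) :=
    le_trans (by gcongr) h
  rw [mul_comm, ENNReal.ofReal_mul (Real.exp_pos _).le, ENNReal.ofReal_inv_of_pos hM,
    ← div_eq_mul_inv]
  exact (ENNReal.le_div_iff_mul_le (Or.inl (ENNReal.ofReal_pos.2 hM).ne')
    (Or.inl ENNReal.ofReal_ne_top)).2 h3

end Aux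

section Statement

variable {X Y : Type*}
  [MeasurableSpace X] [MetricSpace X] [PolishSpace X] [BorelSpace X]
  [MeasurableSpace Y] [MetricSpace Y] [PolishSpace Y] [BorelSpace Y]

/-- large deviations upper bound on compact sets. -/
theorem stmt6 (μ : Measure X) (ν : Measure Y)
    [IsProbabilityMeasure μ] [IsProbabilityMeasure ν]
    (c : X → Y → ℝ) (hc : Continuous fun p : X × Y => c p.1 p.2) (hc0 : ∀ x y, 0 ≤ c x y)
    (πε : ℝ → Measure (X × Y)) [∀ ε, IsProbabilityMeasure (πε ε)]
    (hπε : ∀ ε, 0 < ε → IsCyclInvariant c ε μ ν (πε ε))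
    (πs : Measure (X × Y)) (hπs : IsCoupling μ ν πs) (hconv : TendstoWeakly πε πs)
    (C : Set (X × Y)) (hC : IsCompact C) :
    limsup (fun (ε : ℝ) => (ε : EReal) * ENNReal.log (πε ε C)) (𝓝[>] (0 : ℝ)) ≤
      -⨅ z ∈ C, rateI c (mSupport πs) z := by
  have := hπs.1
  refine le_of_forall_gt_imp_ge_of_dense fun b hb => ?_
  induction b using EReal.rec with
  | bot => exact absurd hb not_lt_bot
  | top => exact le_top
  | coe b =>
  have hb' : ((-b : ℝ) : EReal) < ⨅ z ∈ C, rateI c (mSupport πs) z := by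
    rw [EReal.coe_neg]
    exact EReal.neg_lt_comm.1 hb
  have key : ∃ K : ℝ, 0 < K ∧ ∀ᶠ ε in 𝓝[>] (0 : ℝ),
      πε ε C ≤ ENNReal.ofReal (K * Real.exp (-(-b) / ε)) := by
    refine hC.induction_on (p := fun S => ∃ K : ℝ, 0 < K ∧ ∀ᶠ ε in 𝓝[>] (0 : ℝ),
      πε ε S ≤ ENNReal.ofReal (K * Real.exp (-(-b) / ε))) ?_ ?_ ?_ ?_
    · exact ⟨1, one_pos, by simp⟩
    · rintro s t hst ⟨K, hK, h⟩
      refine ⟨K, hK, ?_⟩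
      filter_upwards [h] with ε hε
      exact (measure_mono hst).trans hε
    · rintro s t ⟨K, hK, h⟩ ⟨L, hL, h'⟩
      refine ⟨K + L, add_pos hK hL, ?_⟩
      filter_upwards [h, h'] with ε hε hε'
      rw [add_mul, ENNReal.ofReal_add (by positivity) (by positivity)]
      exact (measure_union_le _ _).trans (add_le_add hε hε')
    · intro z hz
      obtain ⟨U, hU, h⟩ := local_bound μ ν c hc πε hπε πs hconv z (-b)
        (lt_of_lt_of_le hb' (iInf₂_le z hz))
      exact ⟨U, mem_nhdsWithin_of_mem_nhds hU, h⟩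
  obtain ⟨K, hK, h⟩ := key
  have hle : ∀ᶠ (ε : ℝ) in 𝓝[>] (0 : ℝ), (ε : EReal) * ENNReal.log (πε ε C) ≤
      ((ε * Real.log K + b : ℝ) : EReal) := by
    filter_upwards [h, self_mem_nhdsWithin] with ε hε hε0
    have hε0' : 0 < ε := hε0
    have h1 : ENNReal.log (πε ε C) ≤ ((Real.log K + b / ε : ℝ) : EReal) := by
      refine (ENNReal.log_monotone hε).trans_eq ?_
      rw [ENNReal.log_ofReal_of_pos (by positivity), Real.log_mul hK.ne' (Real.exp_pos _).ne',
        Real.log_exp, neg_neg]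
    refine (mul_le_mul_of_nonneg_left h1 (EReal.coe_nonneg.2 hε0'.le)).trans_eq ?_
    rw [← EReal.coe_mul]
    congr 1
    field_simp
  have hlim : Tendsto (fun ε : ℝ => ((ε * Real.log K + b : ℝ) : EReal)) (𝓝[>] (0 : ℝ))
      (𝓝 (b : EReal)) := by
    refine (continuous_coe_real_ereal.tendsto b).comp ?_
    have : Continuous fun ε : ℝ => ε * Real.log K + b := by fun_prop
    have h := this.tendsto 0
    simp only [zero_mul, zero_add] at h
    exact h.mono_left nhdsWithin_le_nhds
  exact (limsup_le_limsup hle).trans_eq hlim.limsup_eq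

end Statement

end EOT
end
end

section
/- Suppose uniqueness of Kantorovich potentials holds on X_0 := proj_X Γ, i.e. for any c-convex functions ψ_1, ψ_2 on X with Γ ⊂ ∂_c ψ_i (i = 1,2), the difference ψ_1 − ψ_2 is constant on X_0. Then for any Kantorovich potential ψ (a c-convex function with Γ ⊂ ∂_c ψ), I(x,y) = c(x,y) − ψ^c(y) + ψ(x) for all (x,y) ∈ X_0 × Y_0 where Y_0 := proj_Y Γ; in particular I < ∞ on X_0 × Y_0. Moreover, if (x,y), (x',y') ∈ X_0 × Y_0 are such that (x',y) ∈ Γ and (x,y') ∈ Γ, then I(x,y) + I(x',y') = c(x,y) + c(x',y') − c(x,y') − c(x',y). -/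
open MeasureTheory Filter Topology Set
open scoped ENNReal

noncomputable section

namespace EOT

variable {X Y : Type*}

section Helpers

variable {X Y : Type*}

/-- Values of chains in `Γ` starting at `z₀` and ending at `y`. -/
inductive Chn (c : X → Y → ℝ) (Γ : Set (X × Y)) (z₀ : X × Y) : Y → ℝ → Prop
  | base : Chn c Γ z₀ z₀.2 (c z₀.1 z₀.2)
  | step (y : Y) (s : ℝ) (p : X × Y) : Chn c Γ z₀ y s → p ∈ Γ →
      Chn c Γ z₀ p.2 (s - c p.1 y + c p.1 p.2)

def zet (c : X → Y → ℝ) (Γ : Set (X × Y)) (z₀ : X × Y) (y : Y) : EReal :=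
  ⨆ (s : ℝ) (_ : Chn c Γ z₀ y s), (s : EReal)

def pot (c : X → Y → ℝ) (Γ : Set (X × Y)) (z₀ : X × Y) (x : X) : EReal :=
  ⨆ y, zet c Γ z₀ y - (c x y : EReal)

lemma cons_sum {c : X → Y → ℝ} {k : ℕ} (q : X × Y) (p : Fin (k + 1) → X × Y) :
    ∑ i : Fin (k + 1), c ((Fin.cons q p : Fin (k + 2) → X × Y) i.castSucc).1
      ((Fin.cons q p : Fin (k + 2) → X × Y) i.succ).2 =
      c q.1 (p 0).2 + ∑ i : Fin k, c (p i.castSucc).1 (p i.succ).2 := by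
  rw [Fin.sum_univ_succ]
  simp [← Fin.succ_castSucc]

lemma cons_sum_diag {c : X → Y → ℝ} {k : ℕ} (q : X × Y) (p : Fin (k + 1) → X × Y) :
    ∑ i, c ((Fin.cons q p : Fin (k + 2) → X × Y) i).1
      ((Fin.cons q p : Fin (k + 2) → X × Y) i).2 =
      c q.1 q.2 + ∑ i, c (p i).1 (p i).2 := by
  rw [Fin.sum_univ_succ]
  simp

lemma chn_rep {c : X → Y → ℝ} {Γ : Set (X × Y)} {z₀ : X × Y} (hz : z₀ ∈ Γ) {y : Y} {s : ℝ}
    (h : Chn c Γ z₀ y s) : ∃ (k : ℕ) (p : Fin (k + 1) → X × Y), (∀ i, p i ∈ Γ) ∧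
      p (Fin.last k) = z₀ ∧ (p 0).2 = y ∧
      s = (∑ i, c (p i).1 (p i).2) - ∑ i : Fin k, c (p i.castSucc).1 (p i.succ).2 := by
  induction h with
  | base => exact ⟨0, fun _ => z₀, fun _ => hz, rfl, rfl, by simp⟩
  | step y s q h hq ih =>
    obtain ⟨k, p, h1, h2, h3, h4⟩ := ih
    refine ⟨k + 1, Fin.cons q p, ?_, ?_, ?_, ?_⟩
    · intro i
      refine Fin.cases ?_ ?_ i
      · simpa using hq
      · intro j; simpa using h1 j
    · rw [← Fin.succ_last]; simpa using h2
    · simp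
    · rw [cons_sum, cons_sum_diag]
      rw [h4, h3]; ring

lemma cyc_sum {c : X → Y → ℝ} {k : ℕ} (p : Fin (k + 1) → X × Y) :
    ∑ i, c (p i).1 (p (i + 1)).2 =
      (∑ i : Fin k, c (p i.castSucc).1 (p i.succ).2) + c (p (Fin.last k)).1 (p 0).2 := by
  rw [Fin.sum_univ_castSucc]
  simp

lemma chn_le {c : X → Y → ℝ} {Γ : Set (X × Y)} (hΓ : CCyclMonotone c Γ)
    {z₀ : X × Y} (hz : z₀ ∈ Γ) {y : Y} {s : ℝ}
    (h : Chn c Γ z₀ y s) : s - c z₀.1 y ≤ 0 := by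
  obtain ⟨k, p, h1, h2, h3, h4⟩ := chn_rep hz h
  have := hΓ k p h1
  rw [cyc_sum, h2, h3] at this
  linarith

lemma chn_rate {c : X → Y → ℝ} {Γ : Set (X × Y)}
    {z₀ : X × Y} (hz : z₀ ∈ Γ) {y : Y} {s : ℝ} (x : X)
    (h : Chn c Γ z₀ y s) :
    ((c x z₀.2 + s - c x y - c z₀.1 z₀.2 : ℝ) : EReal) ≤ rateI c Γ (x, z₀.2) := by
  obtain ⟨k, p, h1, h2, h3, h4⟩ := chn_rep hz h
  unfold rateI
  refine le_iSup_of_le k (le_iSup_of_le (Fin.cons (x, z₀.2) p) (le_iSup_of_le (by simp)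
    (le_iSup_of_le ?_ (le_iSup_of_le (Equiv.addRight 1) ?_))))
  · intro i
    refine Fin.cases ?_ ?_ i
    · simp
    · intro j _; simpa using h1 j
  · simp only [Equiv.coe_addRight]
    rw [cyc_sum, cons_sum, cons_sum_diag, ← Fin.succ_last]
    simp only [Fin.cons_zero, Fin.cons_succ]
    rw [h2, h3, h4]
    apply le_of_eq
    congr 1
    ring

lemma pot_le {c : X → Y → ℝ} {Γ : Set (X × Y)} {z₀ : X × Y} {x : X} {m : ℝ}
    (h : ∀ y s, Chn c Γ z₀ y s → s - c x y ≤ m) : pot c Γ z₀ x ≤ m := by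
  refine iSup_le fun y => ?_
  rw [EReal.sub_le_iff_le_add (by simp) (by simp)]
  refine iSup_le fun s => iSup_le fun hs => ?_
  rw [← EReal.coe_add, EReal.coe_le_coe_iff]
  linarith [h y s hs]

lemma zet_ge {c : X → Y → ℝ} {Γ : Set (X × Y)} {z₀ : X × Y} {y : Y} {s : ℝ}
    (h : Chn c Γ z₀ y s) : (s : EReal) ≤ zet c Γ z₀ y :=
  le_iSup_of_le s (le_iSup_of_le h le_rfl)

lemma pot_ge {c : X → Y → ℝ} {Γ : Set (X × Y)} {z₀ : X × Y} {y : Y} {s : ℝ} (x : X)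
    (h : Chn c Γ z₀ y s) : ((s - c x y : ℝ) : EReal) ≤ pot c Γ z₀ x := by
  refine le_iSup_of_le y ?_
  rw [EReal.coe_sub]
  exact EReal.sub_le_sub (zet_ge h) le_rfl

lemma pot_base {c : X → Y → ℝ} {Γ : Set (X × Y)} (hΓ : CCyclMonotone c Γ)
    {z₀ : X × Y} (hz : z₀ ∈ Γ) : pot c Γ z₀ z₀.1 = 0 := by
  apply le_antisymm
  · exact pot_le (m := 0) fun y s h => chn_le hΓ hz h
  · have := pot_ge z₀.1 (Chn.base (c := c) (Γ := Γ) (z₀ := z₀))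
    simpa using this

lemma pot_real {c : X → Y → ℝ} {Γ : Set (X × Y)} (hΓ : CCyclMonotone c Γ)
    {z₀ : X × Y} (hz : z₀ ∈ Γ) {p : X × Y} (hp : p ∈ Γ) :
    ∃ f : ℝ, pot c Γ z₀ p.1 = f := by
  have h1 : pot c Γ z₀ p.1 ≤ ((c z₀.1 p.2 - c p.1 p.2 : ℝ) : EReal) := by
    refine pot_le fun y s h => ?_
    have := chn_le hΓ hz (Chn.step y s p h hp)
    linarith
  have h2 := pot_ge p.1 (Chn.base (c := c) (Γ := Γ) (z₀ := z₀))
  refine ⟨(pot c Γ z₀ p.1).toReal, (EReal.coe_toReal ?_ ?_).symm⟩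
  · exact ne_top_of_le_ne_top (EReal.coe_ne_top _) h1
  · exact ne_bot_of_le_ne_bot (EReal.coe_ne_bot _) h2

lemma pot_isPot {c : X → Y → ℝ} {Γ : Set (X × Y)} (hΓ : CCyclMonotone c Γ)
    {z₀ : X × Y} (hz : z₀ ∈ Γ) : IsKantorovichPotential c Γ (pot c Γ z₀) := by
  refine ⟨⟨fun x => ?_, ⟨z₀.1, ?_⟩, zet c Γ z₀, fun x => rfl⟩, ?_⟩
  · exact ne_bot_of_le_ne_bot (EReal.coe_ne_bot _)
      (pot_ge x (Chn.base (c := c) (Γ := Γ) (z₀ := z₀)))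
  · rw [pot_base hΓ hz]; simp
  · intro p hp
    obtain ⟨f, hf⟩ := pot_real hΓ hz hp
    have hle : cConj c (pot c Γ z₀) p.2 ≤ ((f + c p.1 p.2 : ℝ) : EReal) := by
      refine iInf_le_of_le p.1 ?_
      rw [hf, EReal.coe_add]
    have hz' : ((f + c p.1 p.2 : ℝ) : EReal) ≤ zet c Γ z₀ p.2 := by
      by_contra hcon
      push Not at hcon
      obtain ⟨r, hr1, hr2⟩ := EReal.lt_iff_exists_real_btwn.1 hcon
      have : pot c Γ z₀ p.1 ≤ ((r - c p.1 p.2 : ℝ) : EReal) := by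
        refine pot_le fun y s h => ?_
        have := (zet_ge (Chn.step y s p h hp)).trans hr1.le
        rw [EReal.coe_le_coe_iff] at this
        linarith
      rw [hf, EReal.coe_le_coe_iff] at this
      rw [EReal.coe_lt_coe_iff] at hr2
      linarith
    have hge : ((f + c p.1 p.2 : ℝ) : EReal) ≤ cConj c (pot c Γ z₀) p.2 := by
      refine le_iInf fun x => hz'.trans ?_
      rw [← EReal.sub_le_iff_le_add (by simp) (by simp)]
      exact le_iSup (fun y => zet c Γ z₀ y - (c x y : EReal)) p.2
    show cConj c (pot c Γ z₀) p.2 - pot c Γ z₀ p.1 = _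
    rw [le_antisymm hle hge, hf, ← EReal.coe_sub]
    congr 1; ring

lemma sub_real {a b : EReal} {r : ℝ} (h : a - b = r) :
    ∃ a' b' : ℝ, a = a' ∧ b = b' ∧ a' - b' = r := by
  induction a <;> induction b
  case coe.coe a b => exact ⟨a, b, rfl, rfl, by exact_mod_cast h⟩
  all_goals simp [sub_eq_add_neg] at h

lemma isPot_real {c : X → Y → ℝ} {Γ : Set (X × Y)} {ψ : X → EReal}
    (hψ : IsKantorovichPotential c Γ ψ) {p : X × Y} (hp : p ∈ Γ) :
    ∃ b a : ℝ, cConj c ψ p.2 = b ∧ ψ p.1 = a ∧ b - a = c p.1 p.2 :=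
  sub_real (hψ.2 hp)

lemma rate_le {c : X → Y → ℝ} {Γ : Set (X × Y)} {ψ : X → EReal}
    (hψ : IsKantorovichPotential c Γ ψ) {x : X} (hx : x ∈ Prod.fst '' Γ) {y : Y}
    (hy : y ∈ Prod.snd '' Γ) :
    rateI c Γ (x, y) ≤ ((c x y - (cConj c ψ y).toReal + (ψ x).toReal : ℝ) : EReal) := by
  refine iSup_le fun k => iSup_le fun p => iSup_le fun h0 => iSup_le fun hp => iSup_le fun σ => ?_
  rw [EReal.coe_le_coe_iff]
  have hX : ∀ i, (p i).1 ∈ Prod.fst '' Γ := by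
    intro i
    by_cases hi : i = 0
    · rw [hi, h0]; exact hx
    · exact ⟨_, hp i hi, rfl⟩
  have hY : ∀ i, (p i).2 ∈ Prod.snd '' Γ := by
    intro i
    by_cases hi : i = 0
    · rw [hi, h0]; exact hy
    · exact ⟨_, hp i hi, rfl⟩
  have key : ∀ i j, (cConj c ψ (p j).2).toReal - (ψ (p i).1).toReal ≤ c (p i).1 (p j).2 := by
    intro i j
    obtain ⟨q, hq, hqi⟩ := hX i
    obtain ⟨q', hq', hqj⟩ := hY j
    obtain ⟨b, a, -, ha, -⟩ := isPot_real hψ hq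
    obtain ⟨b', a', hb, -, -⟩ := isPot_real hψ hq'
    rw [← hqi, ← hqj, ha, hb]
    have : cConj c ψ q'.2 ≤ ψ q.1 + (c q.1 q'.2 : EReal) := iInf_le _ q.1
    rw [ha, hb, ← EReal.coe_add, EReal.coe_le_coe_iff] at this
    simp only [EReal.toReal_coe]
    linarith
  have h1 : ∑ i, ((cConj c ψ (p (σ i)).2).toReal - (ψ (p i).1).toReal) ≤
      ∑ i, c (p i).1 (p (σ i)).2 := Finset.sum_le_sum fun i _ => key i (σ i)
  rw [Finset.sum_sub_distrib, Equiv.sum_comp σ (fun j => (cConj c ψ (p j).2).toReal),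
    ← Finset.sum_sub_distrib, Fin.sum_univ_succ] at h1
  have h2 : ∑ i : Fin (k + 1), ((cConj c ψ (p i.succ).2).toReal - (ψ (p i.succ).1).toReal) =
      ∑ i : Fin (k + 1), c (p i.succ).1 (p i.succ).2 := by
    refine Finset.sum_congr rfl fun i _ => ?_
    obtain ⟨b, a, hb, ha, hab⟩ := isPot_real hψ (hp i.succ (Fin.succ_ne_zero i))
    rw [hb, ha]; simpa using hab
  rw [Fin.sum_univ_succ (f := fun i => c (p i).1 (p i).2)]
  rw [h2] at h1
  rw [h0] at h1 ⊢
  simp only at h1 ⊢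
  linarith

lemma rate_eq {c : X → Y → ℝ} {Γ : Set (X × Y)} (hΓ : CCyclMonotone c Γ)
    (huniq : UniquenessOfPotentials c Γ (Prod.fst '' Γ)) {ψ : X → EReal}
    (hψ : IsKantorovichPotential c Γ ψ) {x : X} (hx : x ∈ Prod.fst '' Γ) {y : Y}
    (hy : y ∈ Prod.snd '' Γ) :
    rateI c Γ (x, y) = ((c x y - (cConj c ψ y).toReal + (ψ x).toReal : ℝ) : EReal) := by
  refine le_antisymm (rate_le hψ hx hy) ?_
  obtain ⟨z₀, hz, rfl⟩ := hy
  obtain ⟨q, hq, rfl⟩ := hx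
  obtain ⟨b0, a0, hb0, ha0, hab0⟩ := isPot_real hψ hz
  obtain ⟨b, a, hb, ha, hab⟩ := isPot_real hψ hq
  obtain ⟨f, hf⟩ := pot_real hΓ hz hq
  have hu := huniq ψ (pot c Γ z₀) hψ (pot_isPot hΓ hz) q.1 ⟨q, hq, rfl⟩ z₀.1 ⟨z₀, hz, rfl⟩
  rw [pot_base hΓ hz, hf, ha, ha0, ← EReal.coe_zero, ← EReal.coe_sub, ← EReal.coe_sub,
    EReal.coe_eq_coe_iff] at hu
  rw [hb0, ha, EReal.toReal_coe, EReal.toReal_coe]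
  by_contra hcon
  push Not at hcon
  obtain ⟨r, hr1, hr2⟩ := EReal.lt_iff_exists_real_btwn.1 hcon
  rw [EReal.coe_lt_coe_iff] at hr2
  have : pot c Γ z₀ q.1 ≤ ((r - c q.1 z₀.2 + c z₀.1 z₀.2 : ℝ) : EReal) := by
    refine pot_le fun y s h => ?_
    have := (chn_rate hz q.1 h).trans hr1.le
    rw [EReal.coe_le_coe_iff] at this
    linarith
  rw [hf, EReal.coe_le_coe_iff] at this
  linarith

end Helpers

section Statement

variable {X Y : Type*} [TopologicalSpace X] [TopologicalSpace Y]

/-- under uniqueness of Kantorovich potentials, the rate function is the gap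
to the dual potential, is finite on `X₀ × Y₀`, and satisfies the two-point sum identity. -/
theorem stmt7 (c : X → Y → ℝ) (hc : Continuous fun p : X × Y => c p.1 p.2)
    (hc0 : ∀ x y, 0 ≤ c x y)
    (Γ : Set (X × Y)) (hΓne : Γ.Nonempty) (hΓ : CCyclMonotone c Γ)
    (huniq : UniquenessOfPotentials c Γ (Prod.fst '' Γ)) :
    (∀ ψ : X → EReal, IsKantorovichPotential c Γ ψ →
      ∀ x ∈ Prod.fst '' Γ, ∀ y ∈ Prod.snd '' Γ,
        rateI c Γ (x, y) = (c x y : EReal) - cConj c ψ y + ψ x) ∧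
    (∀ x ∈ Prod.fst '' Γ, ∀ y ∈ Prod.snd '' Γ, rateI c Γ (x, y) < ⊤) ∧
    (∀ x ∈ Prod.fst '' Γ, ∀ y ∈ Prod.snd '' Γ, ∀ x' ∈ Prod.fst '' Γ, ∀ y' ∈ Prod.snd '' Γ,
      (x', y) ∈ Γ → (x, y') ∈ Γ →
      rateI c Γ (x, y) + rateI c Γ (x', y') =
        ((c x y + c x' y' - c x y' - c x' y : ℝ) : EReal)) := by
  refine ⟨?_, ?_, ?_⟩
  · intro ψ hψ x hx y hy
    rw [rate_eq hΓ huniq hψ hx hy]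
    obtain ⟨z₀, hz, rfl⟩ := hy
    obtain ⟨q, hq, rfl⟩ := hx
    obtain ⟨b0, a0, hb0, ha0, hab0⟩ := isPot_real hψ hz
    obtain ⟨b, a, hb, ha, hab⟩ := isPot_real hψ hq
    rw [hb0, ha, EReal.toReal_coe, EReal.toReal_coe, EReal.coe_add, EReal.coe_sub]
  · intro x hx y hy
    obtain ⟨z, hz⟩ := hΓne
    rw [rate_eq hΓ huniq (pot_isPot hΓ hz) hx hy]
    exact EReal.coe_lt_top _
  · intro x hx y hy x' hx' y' hy' h1 h2
    obtain ⟨z, hz⟩ := hΓne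
    have hψ := pot_isPot hΓ hz
    rw [rate_eq hΓ huniq hψ hx hy, rate_eq hΓ huniq hψ hx' hy', ← EReal.coe_add,
      EReal.coe_eq_coe_iff]
    obtain ⟨b, a, hb, ha, hab⟩ := isPot_real hψ h1
    obtain ⟨b', a', hb', ha', hab'⟩ := isPot_real hψ h2
    simp only at hb ha hab hb' ha' hab'
    rw [hb, ha, hb', ha']
    simp only [EReal.toReal_coe]
    linarith

end Statement

end EOT
end
end

section
/- For (x_0,y_0) ∈ Γ define the Rockafellar antiderivative ψ_{(x_0,y_0)}(x) := sup_{k≥1} sup_{(x_i,y_i)_{i=1}^k ∈ Γ} Σ_{i=0}^k [c(x_i,y_i) − c(x_{i+1},y_i)] with x_{k+1} := x, and set Ψ_{(x_0,y_0)}(x,y) := ψ_{(x_0,y_0)}^c(y) − ψ_{(x_0,y_0)}(x) on X_0 × Y_0. If Ψ_{(x_0,y_0)} does not depend on the choice of (x_0,y_0) ∈ Γ, then uniqueness of Kantorovich potentials holds on X_0: for any c-convex functions ψ_1, ψ_2 on X with Γ ⊂ ∂_c ψ_i (i = 1,2), ψ_1 − ψ_2 is constant on X_0. -/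
open MeasureTheory Filter Topology Set
open scoped ENNReal

noncomputable section

namespace EOT

variable {X Y : Type*}

theorem rock_le (c : X → Y → ℝ) (Γ : Set (X × Y)) (f : X → ℝ)
    (hf : ∀ z ∈ Γ, ∀ w ∈ Γ, f z.1 + c z.1 z.2 ≤ f w.1 + c w.1 z.2)
    (z₀ : X × Y) (hz₀ : z₀ ∈ Γ) (w : X × Y) (hw : w ∈ Γ) :
    rockafellar c Γ z₀ w.1 ≤ ((f w.1 - f z₀.1 : ℝ) : EReal) := by
  unfold rockafellar
  refine iSup_le fun k => iSup_le fun p => iSup_le fun hp => ?_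
  rw [EReal.coe_le_coe_iff]
  set F : ℕ → ℝ := fun j => f (if h : j < k + 1 then (p ⟨j, h⟩).1 else w.1) with hF
  have h1 : ∑ i : Fin (k + 1),
          (c (p i).1 (p i).2 -
            c (if h : (i : ℕ) + 1 < k + 1 then (p ⟨(i : ℕ) + 1, h⟩).1 else w.1) (p i).2)
      ≤ ∑ i : Fin (k + 1), (F (i + 1) - F i) := by
    refine Finset.sum_le_sum fun i _ => ?_
    have hi : F i = f (p i).1 := by simp only [hF, i.isLt, dite_true]
    rw [hi]
    simp only [hF]
    split_ifs with h
    · linarith [hf (p i) (hp i) (p ⟨(i : ℕ) + 1, h⟩) (hp _)]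
    · linarith [hf (p i) (hp i) w hw]
  rw [Fin.sum_univ_eq_sum_range (fun i => F (i + 1) - F i), Finset.sum_range_sub] at h1
  have h2 : F (k + 1) = f w.1 := by simp [hF]
  have h3 : F 0 = f (p 0).1 := by simp [hF]
  linarith [hf z₀ hz₀ (p 0) (hp 0)]

theorem le_rock (c : X → Y → ℝ) (Γ : Set (X × Y))
    (z₀ : X × Y) (hz₀ : z₀ ∈ Γ) (x : X) :
    ((c z₀.1 z₀.2 - c x z₀.2 : ℝ) : EReal) ≤ rockafellar c Γ z₀ x := by
  unfold rockafellar
  refine le_iSup_of_le 0 (le_iSup_of_le (fun _ => z₀) (le_iSup_of_le (fun _ => hz₀) ?_))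
  simp

theorem pot_real_s8 (c : X → Y → ℝ) (Γ : Set (X × Y)) (ψ : X → EReal)
    (h : IsKantorovichPotential c Γ ψ) (z : X × Y) (hz : z ∈ Γ) :
    ψ z.1 = ((ψ z.1).toReal : EReal) ∧
      cConj c ψ z.2 = (((ψ z.1).toReal + c z.1 z.2 : ℝ) : EReal) := by
  have h1 : cConj c ψ z.2 - ψ z.1 = (c z.1 z.2 : EReal) := h.2 hz
  generalize cConj c ψ z.2 = a at *
  generalize ψ z.1 = b at *
  induction a <;> induction b <;> simp_all [← EReal.coe_sub, ← EReal.coe_add]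
  rw [← h1]; ring

theorem pot_ineq (c : X → Y → ℝ) (Γ : Set (X × Y)) (ψ : X → EReal)
    (h : IsKantorovichPotential c Γ ψ) (z : X × Y) (hz : z ∈ Γ) (w : X × Y) (hw : w ∈ Γ) :
    (ψ z.1).toReal + c z.1 z.2 ≤ (ψ w.1).toReal + c w.1 z.2 := by
  have h1 : cConj c ψ z.2 ≤ ψ w.1 + (c w.1 z.2 : EReal) := iInf_le _ w.1
  rw [(pot_real_s8 c Γ ψ h z hz).2, (pot_real_s8 c Γ ψ h w hw).1, ← EReal.coe_add,
    EReal.coe_le_coe_iff] at h1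
  exact h1

section Statement

variable {X Y : Type*} [TopologicalSpace X] [TopologicalSpace Y]

/-- if the Rockafellar antiderivative gap `Ψ_{(x₀,y₀)}` does not depend on the
base point, then uniqueness of Kantorovich potentials holds on `X₀`. -/
theorem stmt8 (c : X → Y → ℝ) (hc : Continuous fun p : X × Y => c p.1 p.2)
    (hc0 : ∀ x y, 0 ≤ c x y)
    (Γ : Set (X × Y)) (hΓne : Γ.Nonempty) (hΓ : CCyclMonotone c Γ)
    (hindep : ∀ z₀ ∈ Γ, ∀ z₁ ∈ Γ, ∀ x ∈ Prod.fst '' Γ, ∀ y ∈ Prod.snd '' Γ,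
      cConj c (rockafellar c Γ z₀) y - rockafellar c Γ z₀ x =
        cConj c (rockafellar c Γ z₁) y - rockafellar c Γ z₁ x) :
    UniquenessOfPotentials c Γ (Prod.fst '' Γ) := by
  rintro ψ₁ ψ₂ h₁ h₂ _ ⟨z, hz, rfl⟩ _ ⟨w, hw, rfl⟩
  have fin : ∀ z ∈ Γ, ∀ w ∈ Γ, ∃ r : ℝ, rockafellar c Γ z w.1 = r := by
    intro z hz w hw
    have a := rock_le c Γ (fun x => (ψ₁ x).toReal) (pot_ineq c Γ ψ₁ h₁) z hz w hw
    have b := le_rock c Γ z hz w.1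
    refine ⟨(rockafellar c Γ z w.1).toReal, (EReal.coe_toReal ?_ ?_).symm⟩
    · intro h
      rw [h] at a
      exact EReal.coe_ne_top _ (top_le_iff.mp a)
    · intro h
      rw [h] at b
      exact EReal.coe_ne_bot _ (le_bot_iff.mp b)
  obtain ⟨r, hr⟩ := fin z hz w hw
  obtain ⟨s, hs⟩ := fin w hw z hz
  obtain ⟨t, ht⟩ := fin z hz z hz
  have key : 0 ≤ r + s := by
    have e := hindep z hz w hw z.1 ⟨z, hz, rfl⟩ w.2 ⟨w, hw, rfl⟩
    have A : cConj c (rockafellar c Γ z) w.2 ≤ ((r + c w.1 w.2 : ℝ) : EReal) := by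
      refine (iInf_le _ w.1).trans ?_
      rw [hr, EReal.coe_add]
    have B : (c w.1 w.2 : EReal) ≤ cConj c (rockafellar c Γ w) w.2 := by
      refine le_iInf fun x => ?_
      have := add_le_add_left (le_rock c Γ w hw x) (c x w.2 : EReal)
      rw [← EReal.coe_add, sub_add_cancel] at this
      exact this
    have C : 0 ≤ t := by
      have := le_rock c Γ z hz z.1
      rw [ht, EReal.coe_le_coe_iff] at this
      linarith
    rw [ht, hs] at e
    have D := (EReal.sub_le_sub B (le_refl (s : EReal))).trans
      (e.symm.le.trans (EReal.sub_le_sub A (le_refl (t : EReal))))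
    rw [← EReal.coe_sub, ← EReal.coe_sub, EReal.coe_le_coe_iff] at D
    linarith
  have main : ∀ ψ, IsKantorovichPotential c Γ ψ → (ψ w.1).toReal - (ψ z.1).toReal = r := by
    intro ψ h
    have a := rock_le c Γ (fun x => (ψ x).toReal) (pot_ineq c Γ ψ h) z hz w hw
    have b := rock_le c Γ (fun x => (ψ x).toReal) (pot_ineq c Γ ψ h) w hw z hz
    rw [hr, EReal.coe_le_coe_iff] at a
    rw [hs, EReal.coe_le_coe_iff] at b
    linarith
  rw [(pot_real_s8 c Γ ψ₁ h₁ z hz).1, (pot_real_s8 c Γ ψ₁ h₁ w hw).1,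
    (pot_real_s8 c Γ ψ₂ h₂ z hz).1, (pot_real_s8 c Γ ψ₂ h₂ w hw).1, ← EReal.coe_sub, ← EReal.coe_sub]
  congr 1
  linarith [main ψ₁ h₁, main ψ₂ h₂]

end Statement

end EOT
end
end

section
/- Suppose Γ = graph T for a map T: X_0 → Y, X_0 is arcwise connected (any two points of X_0 are joined by a continuous curve of finite length in X_0), and for every compact K ⊂ X_0 one has |c(x_1,T(x_1)) + c(x_2,T(x_2)) − c(x_1,T(x_2)) − c(x_2,T(x_1))| = o(d(x_1,x_2)) uniformly over x_1, x_2 ∈ K. If (x,y), (x',y') ∈ X_0 × Y_0 are such that (x',y) ∈ Γ and (x,y') ∈ Γ, then I(x,y) + I(x',y') ≥ c(x,y) + c(x',y') − c(x,y') − c(x',y). -/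
open MeasureTheory Filter Topology Set
open scoped ENNReal

noncomputable section

namespace EOT

variable {X Y : Type*}

theorem rateI_chain (c : X → Y → ℝ) (Γ : Set (X × Y)) (T : X → Y) (k : ℕ) (w : ℕ → X)
    (hw : ∀ i, (w i, T (w i)) ∈ Γ) :
    ((c (w 0) (T (w (k + 2))) + ∑ i ∈ Finset.range (k + 1), c (w (i + 1)) (T (w (i + 1)))
      - ∑ i ∈ Finset.range (k + 2), c (w i) (T (w (i + 1))) : ℝ) : EReal)
      ≤ rateI c Γ (w 0, T (w (k + 2))) := by
  let p : Fin (k + 2) → X × Y := fun i =>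
    (w i, if i = 0 then T (w (k + 2)) else T (w i))
  have h0 : p 0 = (w 0, T (w (k + 2))) := by simp [p]
  have h1 : ∀ i, i ≠ 0 → p i ∈ Γ := by
    intro i hi
    simp only [p, if_neg hi]
    exact hw _
  unfold rateI
  refine le_trans (le_of_eq ?_) (le_iSup_of_le k (le_iSup_of_le p (le_iSup_of_le h0
    (le_iSup_of_le h1 (le_iSup_of_le (Equiv.addRight 1) le_rfl)))))
  congr 2
  · rw [Fin.sum_univ_succ, Finset.sum_range]
    simp [p, Fin.succ_ne_zero]
  · rw [Fin.sum_univ_castSucc, Finset.sum_range_succ, Finset.sum_range]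
    congr 1
    · refine Finset.sum_congr rfl fun i _ => ?_
      have : (i.castSucc : Fin (k + 2)) + 1 = i.succ := by simp
      simp only [Equiv.coe_addRight, this, p, if_neg (Fin.succ_ne_zero i)]
      simp
    · simp [p]

theorem two_chain (c : X → Y → ℝ) (Γ : Set (X × Y)) (T : X → Y) (k : ℕ) (w : ℕ → X)
    (hw : ∀ i, (w i, T (w i)) ∈ Γ) :
    ((c (w 0) (T (w (k + 2))) + c (w (k + 2)) (T (w 0)) - c (w 0) (T (w 0))
      - c (w (k + 2)) (T (w (k + 2)))
      + ∑ i ∈ Finset.range (k + 2), (c (w i) (T (w i)) + c (w (i + 1)) (T (w (i + 1)))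
        - c (w i) (T (w (i + 1))) - c (w (i + 1)) (T (w i))) : ℝ) : EReal)
      ≤ rateI c Γ (w 0, T (w (k + 2))) + rateI c Γ (w (k + 2), T (w 0)) := by
  have hA := rateI_chain c Γ T k w hw
  have hB := rateI_chain c Γ T k (fun i => w (k + 2 - i)) (fun i => hw _)
  simp only [Nat.sub_zero, Nat.sub_self] at hB
  refine le_trans (le_of_eq ?_) (add_le_add hA hB)
  rw [← EReal.coe_add]
  congr 1
  have e1 : ∑ i ∈ Finset.range (k + 1), c (w (k + 2 - (i + 1))) (T (w (k + 2 - (i + 1))))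
      = ∑ i ∈ Finset.range (k + 1), c (w (i + 1)) (T (w (i + 1))) := by
    rw [← Finset.sum_range_reflect]
    refine Finset.sum_congr rfl fun i hi => ?_
    have := Finset.mem_range.1 hi
    rw [show k + 2 - (k + 1 - 1 - i + 1) = i + 1 by omega]
  have e2 : ∑ i ∈ Finset.range (k + 2), c (w (k + 2 - i)) (T (w (k + 2 - (i + 1))))
      = ∑ i ∈ Finset.range (k + 2), c (w (i + 1)) (T (w i)) := by
    rw [← Finset.sum_range_reflect]
    refine Finset.sum_congr rfl fun i hi => ?_
    have := Finset.mem_range.1 hi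
    rw [show k + 2 - (k + 2 - 1 - i + 1) = i by omega, show k + 2 - (k + 2 - 1 - i) = i + 1 by omega]
  rw [e1, e2]
  simp only [Finset.sum_sub_distrib, Finset.sum_add_distrib]
  rw [Finset.sum_range_succ' (fun i => c (w i) (T (w i))) (k + 1),
    Finset.sum_range_succ (fun i => c (w (i + 1)) (T (w (i + 1)))) (k + 1)]
  ring

section Statement

variable {X Y : Type*} [MetricSpace X] [MetricSpace Y]

/-- the two-point sum inequality under the regularity assumption. -/
theorem stmt10 (c : X → Y → ℝ) (hc : Continuous fun p : X × Y => c p.1 p.2)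
    (hc0 : ∀ x y, 0 ≤ c x y)
    (Γ : Set (X × Y)) (hΓne : Γ.Nonempty) (hΓ : CCyclMonotone c Γ)
    (T : X → Y) (hgraph : ∀ p ∈ Γ, p.2 = T p.1)
    (harc : ∀ x ∈ Prod.fst '' Γ, ∀ x' ∈ Prod.fst '' Γ,
      ∃ φ : ℝ → X, ContinuousOn φ (Icc 0 1) ∧
        (∀ t ∈ Icc (0 : ℝ) 1, φ t ∈ Prod.fst '' Γ) ∧
        φ 0 = x ∧ φ 1 = x' ∧ eVariationOn φ (Icc 0 1) ≠ ⊤)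
    (hreg : ∀ K : Set X, K ⊆ Prod.fst '' Γ → IsCompact K →
      ∀ η > (0 : ℝ), ∃ δ > (0 : ℝ), ∀ x₁ ∈ K, ∀ x₂ ∈ K, dist x₁ x₂ < δ →
        |c x₁ (T x₁) + c x₂ (T x₂) - c x₁ (T x₂) - c x₂ (T x₁)| ≤ η * dist x₁ x₂)
    (x x' : X) (y y' : Y)
    (hx : x ∈ Prod.fst '' Γ) (hy : y ∈ Prod.snd '' Γ)
    (hx' : x' ∈ Prod.fst '' Γ) (hy' : y' ∈ Prod.snd '' Γ)
    (hx'y : (x', y) ∈ Γ) (hxy' : (x, y') ∈ Γ) :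
    ((c x y + c x' y' - c x y' - c x' y : ℝ) : EReal) ≤
      rateI c Γ (x, y) + rateI c Γ (x', y') := by
  have hTm : ∀ z ∈ Prod.fst '' Γ, (z, T z) ∈ Γ := by
    rintro _ ⟨q, hq, rfl⟩
    rw [← hgraph q hq]; exact hq
  have hy1 : y = T x' := hgraph _ hx'y
  have hy2 : y' = T x := hgraph _ hxy'
  subst hy1 hy2
  obtain ⟨φ, hφc, hφm, hφ0, hφ1, hφv⟩ := harc x hx x' hx'
  set V := (eVariationOn φ (Icc 0 1)).toReal with hV
  have hV0 : 0 ≤ V := ENNReal.toReal_nonneg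
  have key : ∀ η > (0 : ℝ), ((c x (T x') + c x' (T x) - c x (T x) - c x' (T x') - η * V : ℝ) : EReal)
      ≤ rateI c Γ (x, T x') + rateI c Γ (x', T x) := by
    intro η hη
    obtain ⟨δ, hδ, hd⟩ := hreg (φ '' Icc 0 1) (by rintro _ ⟨t, ht, rfl⟩; exact hφm t ht)
      (isCompact_Icc.image_of_continuousOn hφc) η hη
    have huc := isCompact_Icc.uniformContinuousOn_of_continuous hφc
    obtain ⟨r, hr, hur⟩ := Metric.uniformContinuousOn_iff.1 huc δ hδ
    obtain ⟨k, hk⟩ := exists_nat_one_div_lt hr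
    set u : ℕ → ℝ := fun i => min ((i : ℝ) / (k + 2)) 1 with hu
    have hkpos : (0 : ℝ) < k + 2 := by positivity
    have hum : Monotone u := by
      intro a b hab
      have : (a : ℝ) ≤ b := by exact_mod_cast hab
      simp only [hu]
      gcongr
    have huI : ∀ i, u i ∈ Icc (0 : ℝ) 1 := fun i =>
      ⟨le_min (by positivity) zero_le_one, min_le_right _ _⟩
    have hu0 : u 0 = 0 := by simp [hu]
    have hu1 : u (k + 2) = 1 := by
      simp only [hu]; push_cast; rw [div_self hkpos.ne', min_self]
    have hstep : ∀ i, dist (u i) (u (i + 1)) < r := by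
      intro i
      have h1 : u i ≤ u (i + 1) := hum (Nat.le_succ i)
      have h2 : u (i + 1) ≤ u i + 1 / (k + 2) := by
        simp only [hu]; push_cast
        rw [← min_add_add_right]
        have : (0 : ℝ) ≤ 1 / (k + 2) := by positivity
        refine min_le_min (by rw [add_div]) (by linarith)
      have h3 : (1 : ℝ) / (k + 2) ≤ 1 / (k + 1) := by
        apply one_div_le_one_div_of_le <;> [positivity; linarith]
      rw [Real.dist_eq, abs_sub_comm, abs_of_nonneg (by linarith)]
      linarith
    have hsum : ∑ i ∈ Finset.range (k + 2), dist (φ (u i)) (φ (u (i + 1))) ≤ V := by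
      have h := eVariationOn.sum_le (f := φ) (s := Icc 0 1) (n := k + 2) hum huI
      have h2 := ENNReal.toReal_mono hφv h
      rw [ENNReal.toReal_sum (fun i _ => edist_ne_top _ _)] at h2
      refine le_trans (le_of_eq ?_) h2
      refine Finset.sum_congr rfl fun i _ => ?_
      rw [dist_comm, dist_edist]
    have hch := two_chain c Γ T k (fun i => φ (u i)) (fun i => hTm _ (hφm _ (huI i)))
    simp only [hu0, hu1, hφ0, hφ1] at hch
    refine le_trans ?_ hch
    rw [EReal.coe_le_coe_iff]
    have hlow : -(η * V) ≤ ∑ i ∈ Finset.range (k + 2),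
        (c (φ (u i)) (T (φ (u i))) + c (φ (u (i + 1))) (T (φ (u (i + 1))))
        - c (φ (u i)) (T (φ (u (i + 1)))) - c (φ (u (i + 1))) (T (φ (u i)))) := by
      calc -(η * V) ≤ -(η * ∑ i ∈ Finset.range (k + 2), dist (φ (u i)) (φ (u (i + 1)))) := by
            gcongr
        _ = ∑ i ∈ Finset.range (k + 2), -(η * dist (φ (u i)) (φ (u (i + 1)))) := by
            rw [Finset.mul_sum, Finset.sum_neg_distrib]
        _ ≤ _ := by
            refine Finset.sum_le_sum fun i _ => ?_
            exact (abs_le.1 (hd _ (mem_image_of_mem _ (huI i)) _ (mem_image_of_mem _ (huI (i + 1)))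
              (hur _ (huI i) _ (huI (i + 1)) (hstep i)))).1
    linarith
  refine EReal.ge_of_forall_gt_iff_ge.1 ?_
  intro s hs
  rw [EReal.coe_lt_coe_iff] at hs
  set R := c x (T x') + c x' (T x) - c x (T x) - c x' (T x') with hR
  have hV1 : 0 < V + 1 := by linarith
  have hη : 0 < (R - s) / (V + 1) := div_pos (by linarith) hV1
  refine le_trans ?_ (key _ hη)
  rw [EReal.coe_le_coe_iff]
  have h1 : (R - s) / (V + 1) * (V + 1) = R - s := div_mul_cancel₀ _ hV1.ne'
  nlinarith

end Statement

end EOT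
end
end

section
/- (Large deviations lower bound under regularity.) Suppose Γ = graph T for a map T: X_0 → Y, X_0 is arcwise connected (any two points of X_0 are joined by a continuous curve of finite length in X_0), and for every compact K ⊂ X_0 one has |c(x_1,T(x_1)) + c(x_2,T(x_2)) − c(x_1,T(x_2)) − c(x_2,T(x_1))| = o(d(x_1,x_2)) uniformly over x_1, x_2 ∈ K. Then for every open set U ⊂ X_0 × Y_0, liminf_{ε→0} ε log π_ε(U) ≥ −inf_{(x,y)∈U} I(x,y). -/
open MeasureTheory Filter Topology Set
open scoped ENNReal

noncomputable section

namespace EOT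

variable {X Y : Type*}

section Aux

/-- Product factorisation of a cyclically invariant density. -/
theorem aux_factor {X Y : Type*} [MeasurableSpace X] [MeasurableSpace Y]
    (c : X → Y → ℝ) (hcm : Measurable fun p : X × Y => c p.1 p.2) (ε : ℝ)
    (μ : Measure X) (ν : Measure Y) (π : Measure (X × Y))
    (h : IsCyclInvariant c ε μ ν π) (x₀ : X) (y₀ : Y) :
    ∃ (F : X → ℝ) (G : Y → ℝ), Measurable F ∧ Measurable G ∧ (∀ x, 0 < F x) ∧ (∀ y, 0 < G y) ∧
      π = (μ.prod ν).withDensity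
        (fun z => ENNReal.ofReal (Real.exp (-(c z.1 z.2) / ε) * (F z.1 * G z.2))) := by
  obtain ⟨-, D, hDm, hDpos, hπ, hcyc⟩ := h
  have key : ∀ x y, D (x, y) = Real.exp (-(c x y) / ε) *
      ((D (x, y₀) * Real.exp (c x y₀ / ε)) *
        (D (x₀, y) * Real.exp (c x₀ y / ε) * (Real.exp (-(c x₀ y₀) / ε) / D (x₀, y₀)))) := by
    intro x y
    have h1 : (∏ i : Fin 2, D (![x, x₀] i, ![y, y₀] i)) =
        Real.exp (-(1 / ε) * ((∑ i : Fin 2, c (![x, x₀] i) (![y, y₀] i)) -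
          ∑ i : Fin 2, c (![x, x₀] i) (![y, y₀] (i + 1)))) *
        ∏ i : Fin 2, D (![x, x₀] i, ![y, y₀] (i + 1)) := hcyc 1 ![x, x₀] ![y, y₀]
    simp only [Fin.prod_univ_two, Fin.sum_univ_two, Matrix.cons_val_zero, Matrix.cons_val_one,
      show (0 : Fin 2) + 1 = 1 from rfl, show (1 : Fin 2) + 1 = 0 from rfl] at h1
    have h2 : Real.exp (-(1 / ε) * (c x y + c x₀ y₀ - (c x y₀ + c x₀ y))) =
        Real.exp (-(c x y) / ε) * Real.exp (c x y₀ / ε) * Real.exp (c x₀ y / ε) *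
          Real.exp (-(c x₀ y₀) / ε) := by
      rw [← Real.exp_add, ← Real.exp_add, ← Real.exp_add]
      congr 1
      ring
    rw [h2] at h1
    have h3 := (hDpos (x₀, y₀)).ne'
    field_simp
    rw [h1]
    ring
  have m1 : Measurable fun x : X => D (x, y₀) := hDm.comp (by fun_prop)
  have m2 : Measurable fun y : Y => D (x₀, y) := hDm.comp (by fun_prop)
  have m3 : Measurable fun x : X => c x y₀ :=
    hcm.comp (f := fun x : X => (x, y₀)) (by fun_prop)
  have m4 : Measurable fun y : Y => c x₀ y :=
    hcm.comp (f := fun y : Y => (x₀, y)) (by fun_prop)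
  refine ⟨fun x => D (x, y₀) * Real.exp (c x y₀ / ε),
    fun y => D (x₀, y) * Real.exp (c x₀ y / ε) * (Real.exp (-(c x₀ y₀) / ε) / D (x₀, y₀)),
    by fun_prop, by fun_prop, fun x => ?_, fun y => ?_, ?_⟩
  · have := hDpos (x, y₀)
    positivity
  · have := hDpos (x₀, y)
    have := hDpos (x₀, y₀)
    positivity
  · rw [hπ]
    congr 1
    funext z
    rw [← key]

/-- Two-sided estimate on boxes. -/
theorem aux_box {X Y : Type*} [MeasurableSpace X] [MeasurableSpace Y]
    (c : X → Y → ℝ) (ε : ℝ) (hε : 0 < ε)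
    (μ : Measure X) (ν : Measure Y) [SFinite μ] [SFinite ν] (F : X → ℝ) (G : Y → ℝ)
    (hF : Measurable F) (hG : Measurable G) (hF0 : ∀ x, 0 < F x) (hG0 : ∀ y, 0 < G y)
    (A : Set X) (B : Set Y) (hA : MeasurableSet A) (hB : MeasurableSet B) (a r : ℝ)
    (hab : ∀ x ∈ A, ∀ y ∈ B, |c x y - a| ≤ r) :
    (μ.prod ν).withDensity
        (fun z => ENNReal.ofReal (Real.exp (-(c z.1 z.2) / ε) * (F z.1 * G z.2))) (A ×ˢ B) ≤
      ENNReal.ofReal (Real.exp ((r - a) / ε)) *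
        ((∫⁻ x in A, ENNReal.ofReal (F x) ∂μ) * (∫⁻ y in B, ENNReal.ofReal (G y) ∂ν)) ∧
    ENNReal.ofReal (Real.exp ((-r - a) / ε)) *
        ((∫⁻ x in A, ENNReal.ofReal (F x) ∂μ) * (∫⁻ y in B, ENNReal.ofReal (G y) ∂ν)) ≤
    (μ.prod ν).withDensity
        (fun z => ENNReal.ofReal (Real.exp (-(c z.1 z.2) / ε) * (F z.1 * G z.2))) (A ×ˢ B) := by
  have hm : MeasurableSet (A ×ˢ B) := hA.prod hB
  have hint : ∀ t : ℝ, ENNReal.ofReal (Real.exp t) *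
        ((∫⁻ x in A, ENNReal.ofReal (F x) ∂μ) * (∫⁻ y in B, ENNReal.ofReal (G y) ∂ν)) =
      ∫⁻ z in A ×ˢ B, ENNReal.ofReal (Real.exp t * (F z.1 * G z.2)) ∂(μ.prod ν) := by
    intro t
    rw [← lintegral_prod_mul (by fun_prop) (by fun_prop), ← Measure.prod_restrict,
      ← lintegral_const_mul' _ _ ENNReal.ofReal_ne_top]
    congr 1
    funext z
    rw [ENNReal.ofReal_mul (Real.exp_pos _).le, ENNReal.ofReal_mul (hF0 _).le]
  rw [withDensity_apply _ hm, hint, hint]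
  constructor
  · refine setLIntegral_mono' hm fun z hz => ENNReal.ofReal_le_ofReal ?_
    have h1 := abs_le.1 (hab z.1 hz.1 z.2 hz.2)
    refine mul_le_mul_of_nonneg_right (Real.exp_le_exp.2 ?_) (mul_pos (hF0 _) (hG0 _)).le
    gcongr
    linarith [h1.1]
  · refine setLIntegral_mono' hm fun z hz => ENNReal.ofReal_le_ofReal ?_
    have h1 := abs_le.1 (hab z.1 hz.1 z.2 hz.2)
    refine mul_le_mul_of_nonneg_right (Real.exp_le_exp.2 ?_) (mul_pos (hF0 _) (hG0 _)).le
    gcongr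
    linarith [h1.2]

/-- Exchange inequality between four boxes. -/
theorem aux_exchange {X Y : Type*} [MeasurableSpace X] [MeasurableSpace Y]
    (c : X → Y → ℝ) (hcm : Measurable fun p : X × Y => c p.1 p.2) (ε : ℝ) (hε : 0 < ε)
    (μ : Measure X) (ν : Measure Y) [SFinite μ] [SFinite ν] (π : Measure (X × Y))
    [IsProbabilityMeasure π]
    (h : IsCyclInvariant c ε μ ν π) (x x' : X) (y y' : Y)
    (A A' : Set X) (B B' : Set Y) (hA : MeasurableSet A) (hB : MeasurableSet B)
    (hA' : MeasurableSet A') (hB' : MeasurableSet B') (r : ℝ)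
    (h1 : ∀ u ∈ A, ∀ v ∈ B, |c u v - c x y| ≤ r)
    (h2 : ∀ u ∈ A', ∀ v ∈ B', |c u v - c x' y'| ≤ r)
    (h3 : ∀ u ∈ A, ∀ v ∈ B', |c u v - c x y'| ≤ r)
    (h4 : ∀ u ∈ A', ∀ v ∈ B, |c u v - c x' y| ≤ r) :
    ENNReal.ofReal (Real.exp ((c x y + c x' y' - c x y' - c x' y - 4 * r) / ε)) *
      (π (A ×ˢ B) * π (A' ×ˢ B')) ≤ π (A ×ˢ B') := by
  obtain ⟨F, G, hF, hG, hF0, hG0, hπ⟩ := aux_factor c hcm ε μ ν π h x y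
  have b1 := (aux_box c ε hε μ ν F G hF hG hF0 hG0 A B hA hB _ r h1).1
  have b2 := (aux_box c ε hε μ ν F G hF hG hF0 hG0 A' B' hA' hB' _ r h2).1
  have b3 := (aux_box c ε hε μ ν F G hF hG hF0 hG0 A B' hA hB' _ r h3).2
  have b4 := (aux_box c ε hε μ ν F G hF hG hF0 hG0 A' B hA' hB _ r h4).2
  rw [← hπ] at b1 b2 b3 b4
  set fA := ∫⁻ x in A, ENNReal.ofReal (F x) ∂μ
  set fA' := ∫⁻ x in A', ENNReal.ofReal (F x) ∂μ
  set gB := ∫⁻ y in B, ENNReal.ofReal (G y) ∂ν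
  set gB' := ∫⁻ y in B', ENNReal.ofReal (G y) ∂ν
  have hexp : ∀ s t : ℝ, ENNReal.ofReal (Real.exp s) * ENNReal.ofReal (Real.exp t) =
      ENNReal.ofReal (Real.exp (s + t)) := by
    intro s t
    rw [← ENNReal.ofReal_mul (Real.exp_pos _).le, Real.exp_add]
  calc ENNReal.ofReal (Real.exp ((c x y + c x' y' - c x y' - c x' y - 4 * r) / ε)) *
      (π (A ×ˢ B) * π (A' ×ˢ B'))
      ≤ ENNReal.ofReal (Real.exp ((c x y + c x' y' - c x y' - c x' y - 4 * r) / ε)) *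
        ((ENNReal.ofReal (Real.exp ((r - c x y) / ε)) * (fA * gB)) *
        (ENNReal.ofReal (Real.exp ((r - c x' y') / ε)) * (fA' * gB'))) := by gcongr
    _ = (ENNReal.ofReal (Real.exp ((c x y + c x' y' - c x y' - c x' y - 4 * r) / ε)) *
        (ENNReal.ofReal (Real.exp ((r - c x y) / ε)) *
        ENNReal.ofReal (Real.exp ((r - c x' y') / ε)))) * (fA * gB' * (fA' * gB)) := by ring
    _ = (ENNReal.ofReal (Real.exp ((-r - c x y') / ε)) *
        ENNReal.ofReal (Real.exp ((-r - c x' y) / ε))) * (fA * gB' * (fA' * gB)) := by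
        rw [hexp, hexp, hexp]
        congr 3
        ring_nf
    _ = (ENNReal.ofReal (Real.exp ((-r - c x y') / ε)) * (fA * gB')) *
        (ENNReal.ofReal (Real.exp ((-r - c x' y) / ε)) * (fA' * gB)) := by ring
    _ ≤ π (A ×ˢ B') * π (A' ×ˢ B) := by gcongr
    _ ≤ π (A ×ˢ B') * 1 := by
        gcongr
        exact prob_le_one
    _ = π (A ×ˢ B') := mul_one _

/-- Local exponential lower bound with rate `a` at `z`. -/
def AuxLB {Z : Type*} [TopologicalSpace Z] [MeasurableSpace Z]
    (π : ℝ → Measure Z) (z : Z) (a : ℝ) : Prop :=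
  ∀ W : Set Z, IsOpen W → z ∈ W → ∀ r > (0 : ℝ),
    ∀ᶠ ε in 𝓝[>] (0 : ℝ), ENNReal.ofReal (Real.exp ((a - r) / ε)) ≤ π ε W

theorem aux_base {Z : Type*} [TopologicalSpace Z] [MeasurableSpace Z] [OpensMeasurableSpace Z]
    [HasOuterApproxClosed Z] (π : ℝ → Measure Z) [∀ ε, IsProbabilityMeasure (π ε)]
    (πs : Measure Z) [IsProbabilityMeasure πs] (h : TendstoWeakly π πs) (z : Z)
    (hz : z ∈ mSupport πs) : AuxLB π z 0 := by
  intro W hW hzW r hr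
  have hlim := (ProbabilityMeasure.tendsto_iff_forall_integral_tendsto (F := 𝓝[>] (0 : ℝ))
    (μs := fun ε => (⟨π ε, inferInstance⟩ : ProbabilityMeasure Z))
    (μ := (⟨πs, inferInstance⟩ : ProbabilityMeasure Z))).2 h
  have h1 := ProbabilityMeasure.le_liminf_measure_open_of_tendsto hlim hW
  have hpos : 0 < πs W := hz W hW hzW
  obtain ⟨m, hm0, hm⟩ := exists_between hpos
  have h2 : ∀ᶠ ε in 𝓝[>] (0 : ℝ), m < π ε W :=
    eventually_lt_of_lt_liminf (lt_of_lt_of_le hm h1)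
  have h3 : Tendsto (fun ε : ℝ => ENNReal.ofReal (Real.exp ((0 - r) / ε))) (𝓝[>] (0 : ℝ))
      (𝓝 (ENNReal.ofReal 0)) := by
    refine ENNReal.tendsto_ofReal (Real.tendsto_exp_atBot.comp ?_)
    have : Tendsto (fun ε : ℝ => (-r) * ε⁻¹) (𝓝[>] (0 : ℝ)) atBot :=
      tendsto_inv_nhdsGT_zero.const_mul_atTop_of_neg (by linarith)
    refine this.congr fun ε => ?_
    ring
  rw [ENNReal.ofReal_zero] at h3
  filter_upwards [h2, h3.eventually (gt_mem_nhds hm0)] with ε h4 h5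
  exact (h5.trans h4).le

theorem aux_comp {X Y : Type*}
    [MeasurableSpace X] [MetricSpace X] [PolishSpace X] [BorelSpace X]
    [MeasurableSpace Y] [MetricSpace Y] [PolishSpace Y] [BorelSpace Y]
    (μ : Measure X) (ν : Measure Y) [IsProbabilityMeasure μ] [IsProbabilityMeasure ν]
    (c : X → Y → ℝ) (hc : Continuous fun p : X × Y => c p.1 p.2)
    (πε : ℝ → Measure (X × Y)) [∀ ε, IsProbabilityMeasure (πε ε)]
    (hπε : ∀ ε, 0 < ε → IsCyclInvariant c ε μ ν (πε ε))
    (x x' : X) (y y' : Y) (a b : ℝ) (h1 : AuxLB πε (x, y) a) (h2 : AuxLB πε (x', y') b) :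
    AuxLB πε (x, y') (a + b + (c x y + c x' y' - c x y' - c x' y)) := by
  intro W hW hxW r hr
  have hloc : ∀ (u : X) (v : Y), ∃ δ > (0 : ℝ), ∀ p ∈ Metric.ball u δ, ∀ q ∈ Metric.ball v δ,
      |c p q - c u v| ≤ r / 6 := by
    intro u v
    obtain ⟨δ, hδ, h⟩ := Metric.continuous_iff.1 hc (u, v) (r / 6) (by linarith)
    refine ⟨δ, hδ, fun p hp q hq => ?_⟩
    have := h (p, q) (by rw [Prod.dist_eq]; exact max_lt hp hq)
    rw [Real.dist_eq] at this
    exact this.le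
  obtain ⟨δ1, hδ1, k1⟩ := hloc x y
  obtain ⟨δ2, hδ2, k2⟩ := hloc x' y'
  obtain ⟨δ3, hδ3, k3⟩ := hloc x y'
  obtain ⟨δ4, hδ4, k4⟩ := hloc x' y
  obtain ⟨δ5, hδ5, k5⟩ := Metric.isOpen_iff.1 hW (x, y') hxW
  obtain ⟨δ, hδ, l1, l2, l3, l4, l5⟩ : ∃ δ > (0 : ℝ), δ ≤ δ1 ∧ δ ≤ δ2 ∧ δ ≤ δ3 ∧ δ ≤ δ4 ∧ δ ≤ δ5 :=
    ⟨min δ1 (min δ2 (min δ3 (min δ4 δ5))), by positivity, by simp, by simp, by simp, by simp,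
      by simp⟩
  have hb : ∀ {Z : Type _} [MetricSpace Z] (z : Z) {δ' : ℝ}, δ ≤ δ' →
      Metric.ball z δ ⊆ Metric.ball z δ' := fun z _ h => Metric.ball_subset_ball h
  have hb' : ∀ (z : Y) {δ' : ℝ}, δ ≤ δ' →
      Metric.ball z δ ⊆ Metric.ball z δ' := fun z _ h => Metric.ball_subset_ball h
  have e1 := h1 (Metric.ball x δ ×ˢ Metric.ball y δ) (Metric.isOpen_ball.prod Metric.isOpen_ball)
    ⟨Metric.mem_ball_self hδ, Metric.mem_ball_self hδ⟩ (r / 6) (by linarith)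
  have e2 := h2 (Metric.ball x' δ ×ˢ Metric.ball y' δ)
    (Metric.isOpen_ball.prod Metric.isOpen_ball)
    ⟨Metric.mem_ball_self hδ, Metric.mem_ball_self hδ⟩ (r / 6) (by linarith)
  filter_upwards [e1, e2, self_mem_nhdsWithin] with ε e1 e2 hε
  have hε : 0 < ε := hε
  have key := aux_exchange c hc.measurable ε hε μ ν (πε ε) (hπε ε hε) x x' y y'
    (Metric.ball x δ) (Metric.ball x' δ) (Metric.ball y δ) (Metric.ball y' δ)
    measurableSet_ball measurableSet_ball measurableSet_ball measurableSet_ball (r / 6)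
    (fun u hu v hv => k1 u (hb x l1 hu) v (hb' y l1 hv))
    (fun u hu v hv => k2 u (hb x' l2 hu) v (hb' y' l2 hv))
    (fun u hu v hv => k3 u (hb x l3 hu) v (hb' y' l3 hv))
    (fun u hu v hv => k4 u (hb x' l4 hu) v (hb' y l4 hv))
  have hsub : Metric.ball x δ ×ˢ Metric.ball y' δ ⊆ W := by
    rintro ⟨p, q⟩ ⟨hp, hq⟩
    apply k5
    rw [Metric.mem_ball, Prod.dist_eq]
    exact max_lt (hb x l5 hp) (hb' y' l5 hq)
  refine le_trans ?_ (key.trans (measure_mono hsub))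
  refine le_trans (le_of_eq ?_) (mul_le_mul_right (mul_le_mul' e1 e2) _)
  rw [← ENNReal.ofReal_mul (Real.exp_pos _).le, ← ENNReal.ofReal_mul (Real.exp_pos _).le,
    ← Real.exp_add, ← Real.exp_add]
  congr 2
  ring

/-- Lower bound along a chain of points of the support. -/
theorem aux_chain {X Y : Type*}
    [MeasurableSpace X] [MetricSpace X] [PolishSpace X] [BorelSpace X]
    [MeasurableSpace Y] [MetricSpace Y] [PolishSpace Y] [BorelSpace Y]
    (μ : Measure X) (ν : Measure Y) [IsProbabilityMeasure μ] [IsProbabilityMeasure ν]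
    (c : X → Y → ℝ) (hc : Continuous fun p : X × Y => c p.1 p.2)
    (πε : ℝ → Measure (X × Y)) [∀ ε, IsProbabilityMeasure (πε ε)]
    (hπε : ∀ ε, 0 < ε → IsCyclInvariant c ε μ ν (πε ε))
    (u : ℕ → X) (v : ℕ → Y) (n : ℕ) (h : ∀ i ≤ n, AuxLB πε (u i, v i) 0) :
    AuxLB πε (u 0, v n) (-c (u 0) (v n) + c (u 0) (v 0) +
      ∑ i ∈ Finset.range n, (c (u (i + 1)) (v (i + 1)) - c (u (i + 1)) (v i))) := by
  induction n with
  | zero => simpa using h 0 le_rfl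
  | succ n ih =>
    have := aux_comp μ ν c hc πε hπε (u 0) (u (n + 1)) (v n) (v (n + 1)) _ _
      (ih fun i hi => h i (by omega)) (h (n + 1) le_rfl)
    convert this using 1
    rw [Finset.sum_range_succ]
    ring

/-- A chain gives a lower bound on the rate function. -/
theorem aux_rate {X Y : Type*} (c : X → Y → ℝ) (Γ : Set (X × Y)) (u : ℕ → X) (v : ℕ → Y) (n : ℕ)
    (h : ∀ i ≤ n, (u i, v i) ∈ Γ) :
    ((c (u 0) (v n) - c (u 0) (v 0) +
      ∑ i ∈ Finset.range n, (c (u i) (v i) - c (u i) (v (i + 1))) : ℝ) : EReal) ≤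
      rateI c Γ (u 0, v n) := by
  unfold rateI
  let p : Fin (n + 2) → X × Y :=
    Fin.cons (u 0, v n) (fun j : Fin (n + 1) => (u j, v j))
  refine le_iSup_of_le n (le_iSup_of_le p (le_iSup_of_le rfl (le_iSup_of_le ?_
    (le_iSup_of_le (finRotate (n + 2)) (le_of_eq ?_)))))
  · intro i hi
    obtain ⟨j, rfl⟩ := Fin.exists_succ_eq.2 hi
    simp only [p, Fin.cons_succ]
    exact h j (by omega)
  · congr 1
    have hs : ∀ j : Fin (n + 1), p j.succ = (u j, v j) := fun j => by simp [p]
    have h0 : p 0 = (u 0, v n) := rfl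
    have r0 : finRotate (n + 2) 0 = Fin.succ 0 := by simp
    have r1 : ∀ j : Fin n, finRotate (n + 2) (Fin.succ (Fin.castSucc j)) = Fin.succ (Fin.succ j) := by
      intro j
      rw [finRotate_apply, Fin.succ_castSucc, Fin.coeSucc_eq_succ]
    have r2 : finRotate (n + 2) (Fin.succ (Fin.last n)) = 0 := by
      rw [Fin.succ_last]; exact finRotate_last
    rw [Fin.sum_univ_succ (n := n + 1), Fin.sum_univ_succ (n := n + 1)]
    rw [Fin.sum_univ_castSucc (n := n), Fin.sum_univ_castSucc (n := n)]
    simp only [r0, r1, r2, hs, h0]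
    simp only [Fin.val_castSucc, Fin.val_last, Fin.val_succ, Fin.val_zero]
    rw [Fin.sum_univ_eq_sum_range (fun i => c (u i) (v i)) n,
      Fin.sum_univ_eq_sum_range (fun i => c (u i) (v (i + 1))) n, Finset.sum_sub_distrib]
    ring

/-- Fine partitions of a rectifiable curve. -/
theorem aux_part {X : Type*} [MetricSpace X] (φ : ℝ → X) (hφ : ContinuousOn φ (Icc 0 1))
    (hV : eVariationOn φ (Icc 0 1) ≠ ⊤) (δ : ℝ) (hδ : 0 < δ) :
    ∃ (n : ℕ) (t : ℕ → ℝ), t 0 = 0 ∧ t n = 1 ∧ (∀ i ≤ n, t i ∈ Icc (0 : ℝ) 1) ∧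
      (∀ i < n, dist (φ (t i)) (φ (t (i + 1))) < δ) ∧
      ∑ i ∈ Finset.range n, dist (φ (t i)) (φ (t (i + 1))) ≤
        (eVariationOn φ (Icc 0 1)).toReal := by
  have huc := isCompact_Icc.uniformContinuousOn_of_continuous hφ
  obtain ⟨δ', hδ', hd⟩ := Metric.uniformContinuousOn_iff.1 huc δ hδ
  obtain ⟨N, hN⟩ := exists_nat_one_div_lt hδ'
  have hN0 : (0 : ℝ) < N + 1 := by positivity
  have hmem : ∀ i ≤ N + 1, (i : ℝ) / (N + 1) ∈ Icc (0 : ℝ) 1 := by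
    intro i hi
    refine ⟨by positivity, ?_⟩
    rw [div_le_one hN0]
    exact_mod_cast hi
  refine ⟨N + 1, fun i => (i : ℝ) / (N + 1), by simp, ?_, hmem, ?_, ?_⟩
  · push_cast
    exact div_self hN0.ne'
  · intro i hi
    refine hd _ (hmem i hi.le) _ (hmem (i + 1) hi) ?_
    rw [Real.dist_eq]
    have : (i : ℝ) / (N + 1) - ((i + 1 : ℕ) : ℝ) / (N + 1) = -(1 / (N + 1)) := by
      push_cast
      ring
    rw [this, abs_neg, abs_of_pos (by positivity)]
    exact hN
  · have h1 := eVariationOn.sum_le_of_monotoneOn_Iic (f := φ) (s := Icc 0 1) (n := N + 1)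
      (u := fun i : ℕ => (i : ℝ) / (N + 1)) (by
        intro i _ j _ hij
        simp only
        gcongr) (fun i hi => hmem i hi)
    have h2 := ENNReal.toReal_mono hV h1
    rw [ENNReal.toReal_sum (fun _ _ => edist_ne_top _ _)] at h2
    refine le_trans (le_of_eq (Finset.sum_congr rfl fun i _ => ?_)) h2
    rw [dist_comm, dist_edist]

end Aux

section Statement

variable {X Y : Type*}
  [MeasurableSpace X] [MetricSpace X] [PolishSpace X] [BorelSpace X]
  [MeasurableSpace Y] [MetricSpace Y] [PolishSpace Y] [BorelSpace Y]

/-- large deviations lower bound under the regularity assumption. -/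
theorem stmt11 (μ : Measure X) (ν : Measure Y)
    [IsProbabilityMeasure μ] [IsProbabilityMeasure ν]
    (c : X → Y → ℝ) (hc : Continuous fun p : X × Y => c p.1 p.2) (hc0 : ∀ x y, 0 ≤ c x y)
    (πε : ℝ → Measure (X × Y)) [∀ ε, IsProbabilityMeasure (πε ε)]
    (hπε : ∀ ε, 0 < ε → IsCyclInvariant c ε μ ν (πε ε))
    (πs : Measure (X × Y)) (hπs : IsCoupling μ ν πs) (hconv : TendstoWeakly πε πs)
    (T : X → Y) (hgraph : ∀ p ∈ mSupport πs, p.2 = T p.1)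
    (harc : ∀ x ∈ Prod.fst '' mSupport πs, ∀ x' ∈ Prod.fst '' mSupport πs,
      ∃ φ : ℝ → X, ContinuousOn φ (Icc 0 1) ∧
        (∀ t ∈ Icc (0 : ℝ) 1, φ t ∈ Prod.fst '' mSupport πs) ∧
        φ 0 = x ∧ φ 1 = x' ∧ eVariationOn φ (Icc 0 1) ≠ ⊤)
    (hreg : ∀ K : Set X, K ⊆ Prod.fst '' mSupport πs → IsCompact K →
      ∀ η > (0 : ℝ), ∃ δ > (0 : ℝ), ∀ x₁ ∈ K, ∀ x₂ ∈ K, dist x₁ x₂ < δ →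
        |c x₁ (T x₁) + c x₂ (T x₂) - c x₁ (T x₂) - c x₂ (T x₁)| ≤ η * dist x₁ x₂) :
    ∀ U : Set (X × Y), IsOpen U →
      U ⊆ (Prod.fst '' mSupport πs) ×ˢ (Prod.snd '' mSupport πs) →
      -(⨅ z ∈ U, rateI c (mSupport πs) z) ≤
        liminf (fun (ε : ℝ) => (ε : EReal) * ENNReal.log (πε ε U)) (𝓝[>] (0 : ℝ)) := by
  intro U hU hUsub
  have := hπs.1
  have hbase : ∀ z ∈ mSupport πs, AuxLB πε z 0 := fun z hz => aux_base πε πs hconv z hz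
  have hT : ∀ x ∈ Prod.fst '' mSupport πs, (x, T x) ∈ mSupport πs := by
    rintro _ ⟨p, hp, rfl⟩
    rw [← hgraph p hp]
    exact hp
  have main : ∀ z ∈ U, ∀ η > (0 : ℝ), ∃ s : ℝ, (s : EReal) ≤ rateI c (mSupport πs) z ∧
      ((-s - η : ℝ) : EReal) ≤
        liminf (fun (ε : ℝ) => (ε : EReal) * ENNReal.log (πε ε U)) (𝓝[>] (0 : ℝ)) := by
    rintro ⟨x, y⟩ hz η hη
    obtain ⟨hx, ⟨⟨x', y1⟩, hq, rfl⟩⟩ := hUsub hz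
    simp only at hx hz
    have hx' : x' ∈ Prod.fst '' mSupport πs := ⟨_, hq, rfl⟩
    have hy : y1 = T x' := hgraph _ hq
    obtain ⟨φ, hφ, hφm, hφ0, hφ1, hV⟩ := harc x hx x' hx'
    set V := (eVariationOn φ (Icc 0 1)).toReal with hVdef
    have hV0 : 0 ≤ V := ENNReal.toReal_nonneg
    obtain ⟨δ, hδ, hd⟩ := hreg (φ '' Icc 0 1) (by rintro _ ⟨t, ht, rfl⟩; exact hφm t ht)
      (isCompact_Icc.image_of_continuousOn hφ) (η / 2 / (V + 1)) (by positivity)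
    obtain ⟨n, t, ht0, htn, htm, htd, hts⟩ := aux_part φ hφ hV δ hδ
    set u : ℕ → X := fun i => φ (t i) with hu
    set v : ℕ → Y := fun i => T (φ (t i)) with hv
    have hmem : ∀ i ≤ n, (u i, v i) ∈ mSupport πs := fun i hi => hT _ (hφm _ (htm i hi))
    have hrate := aux_rate c (mSupport πs) u v n hmem
    have hlb := aux_chain μ ν c hc πε hπε u v n (fun i hi => hbase _ (hmem i hi))
    have hu0 : u 0 = x := by simp only [hu, ht0, hφ0]
    have hvn : v n = y1 := by simp only [hv, htn, hφ1, hy]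
    have hsum : -(η / 2) ≤
        ∑ i ∈ Finset.range n, (c (u (i + 1)) (v (i + 1)) - c (u (i + 1)) (v i)) +
        ∑ i ∈ Finset.range n, (c (u i) (v i) - c (u i) (v (i + 1))) := by
      rw [← Finset.sum_add_distrib]
      have h1 : ∀ i ∈ Finset.range n, -(η / 2 / (V + 1) * dist (φ (t i)) (φ (t (i + 1)))) ≤
          (c (u (i + 1)) (v (i + 1)) - c (u (i + 1)) (v i)) +
            (c (u i) (v i) - c (u i) (v (i + 1))) := by
        intro i hi
        have hi := Finset.mem_range.1 hi
        have := (abs_le.1 (hd _ ⟨_, htm i hi.le, rfl⟩ _ ⟨_, htm (i + 1) hi, rfl⟩ (htd i hi))).1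
        simp only [hu, hv]
        linarith
      have h2 := Finset.sum_le_sum h1
      rw [Finset.sum_neg_distrib, ← Finset.mul_sum] at h2
      have h3 : η / 2 / (V + 1) * ∑ i ∈ Finset.range n, dist (φ (t i)) (φ (t (i + 1))) ≤ η / 2 := by
        calc η / 2 / (V + 1) * ∑ i ∈ Finset.range n, dist (φ (t i)) (φ (t (i + 1)))
            ≤ η / 2 / (V + 1) * (V + 1) := by gcongr; linarith
          _ = η / 2 := by field_simp
      linarith
    rw [hu0, hvn] at hrate hlb
    refine ⟨_, hrate, ?_⟩
    have hev := hlb U hU hz (η / 2) (by linarith)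
    refine le_liminf_of_le (h := ?_)
    filter_upwards [hev, self_mem_nhdsWithin] with ε h1 hε
    have hε : 0 < ε := hε
    have h2 := ENNReal.log_le_log h1
    rw [ENNReal.log_ofReal_of_pos (Real.exp_pos _), Real.log_exp] at h2
    have h3 := mul_le_mul_of_nonneg_left h2 (show (0 : EReal) ≤ (ε : EReal) from
      EReal.coe_nonneg.2 hε.le)
    refine le_trans ?_ h3
    rw [← EReal.coe_mul, mul_div_cancel₀ _ hε.ne', EReal.coe_le_coe_iff]
    linarith
  rw [EReal.neg_le, le_iInf₂_iff]
  intro z hz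
  refine EReal.le_of_forall_lt_iff_le.1 ?_
  intro q hq
  obtain ⟨q', h1, h2⟩ := EReal.lt_iff_exists_real_btwn.1 hq
  have h2' : q' < q := EReal.coe_lt_coe_iff.1 h2
  obtain ⟨s, hs, hl⟩ := main z hz (q - q') (by linarith)
  have h3 : s < q' := EReal.coe_lt_coe_iff.1 (lt_of_le_of_lt hs h1)
  rw [EReal.neg_le]
  refine le_trans ?_ hl
  rw [← EReal.coe_neg, EReal.coe_le_coe_iff]
  linarith

end Statement

end EOT
end
end

section
/- Fix (x,y') ∈ Γ and y ∈ Y. Suppose v := ∇_x c(x,y) − ∇_x c(x,y') ≠ 0 and there exists a sequence (x_n,y_n) ∈ Γ with (x_n,y_n) → (x,y'), x_n ≠ x, such that liminf_n cos α_n > 0, where α_n is the angle between v and x − x_n. Then I(x,y) > 0. -/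
open MeasureTheory Filter Topology Set
open scoped ENNReal

noncomputable section

namespace EOT

variable {X Y : Type*}

section Statement

variable {d : ℕ} {Y : Type*} [MetricSpace Y]

local notation "E" => EuclideanSpace ℝ (Fin d)

/-- positivity of the rate function via an approximating sequence in `Γ`. -/
theorem stmt12 (c : E → Y → ℝ) (hc : Continuous fun p : E × Y => c p.1 p.2)
    (hc0 : ∀ x y, 0 ≤ c x y)
    (hdiff : ∀ y, Differentiable ℝ fun x => c x y)
    (hgrad : Continuous fun p : E × Y => gradient (fun x => c x p.2) p.1)
    (Γ : Set (E × Y)) (hΓne : Γ.Nonempty) (hΓ : CCyclMonotone c Γ)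
    (x : E) (y' : Y) (hxy' : (x, y') ∈ Γ) (y : Y)
    (hv : gradient (fun x' => c x' y) x - gradient (fun x' => c x' y') x ≠ 0)
    (s : ℕ → E × Y) (hsΓ : ∀ n, s n ∈ Γ) (hsx : ∀ n, (s n).1 ≠ x)
    (hslim : Tendsto s atTop (𝓝 (x, y')))
    (hcos : 0 < liminf (fun n => Real.cos (InnerProductGeometry.angle
        (gradient (fun x' => c x' y) x - gradient (fun x' => c x' y') x)
        (x - (s n).1))) atTop) :
    0 < rateI c Γ (x, y) := by
  set v := gradient (fun x' => c x' y) x - gradient (fun x' => c x' y') x with hvdef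
  obtain ⟨δ, hδ0, hδ⟩ := exists_between hcos
  have hev := eventually_lt_of_lt_liminf hδ
    ⟨-1, by
      simp only [eventually_map]
      exact Eventually.of_forall fun n => Real.neg_one_le_cos _⟩
  have hvn : 0 < ‖v‖ := norm_pos_iff.mpr hv
  have hG : Continuous fun p : E × Y =>
      gradient (fun x' => c x' y) p.1 - gradient (fun x' => c x' p.2) p.1 :=
    (hgrad.comp (continuous_fst.prodMk continuous_const)).sub hgrad
  obtain ⟨r, hr, hball⟩ := Metric.continuousAt_iff.mp (hG.continuousAt (x := (x, y')))
    (δ * ‖v‖) (mul_pos hδ0 hvn)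
  obtain ⟨n, hn, hcn⟩ := ((hslim.eventually (Metric.ball_mem_nhds _ hr)).and hev).exists
  have hn2 : dist (s n) (x, y') < r := hn
  rw [Prod.dist_eq, max_lt_iff] at hn2
  obtain ⟨h1, h2⟩ := hn2
  obtain ⟨ξ, hξ, hmv⟩ := domain_mvt (s := univ) (x := (s n).1) (y := x)
    (f := fun z => c z y - c z (s n).2)
    (f' := fun z => fderiv ℝ (fun x' => c x' y) z - fderiv ℝ (fun x' => c x' (s n).2) z)
    (fun z _ => (((hdiff y z).hasFDerivAt).sub ((hdiff (s n).2 z).hasFDerivAt)).hasFDerivWithinAt)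
    convex_univ (mem_univ _) (mem_univ _)
  have hξb : dist ξ x < r :=
    (convex_ball x r).segment_subset (Metric.mem_ball.mpr h1) (Metric.mem_ball_self hr) hξ
  have hb := @hball (ξ, (s n).2) (by
    rw [Prod.dist_eq, max_lt_iff]; exact ⟨hξb, h2⟩)
  set w := gradient (fun x' => c x' y) ξ - gradient (fun x' => c x' (s n).2) ξ with hw
  have hb' : ‖w - v‖ < δ * ‖v‖ := by
    rw [dist_eq_norm] at hb; exact hb
  have hmv' : c x y - c x (s n).2 - (c (s n).1 y - c (s n).1 (s n).2)
      = inner ℝ w (x - (s n).1) := by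
    rw [hw, inner_sub_left]
    simpa [gradient, InnerProductSpace.toDual_symm_apply] using hmv
  have hu : 0 < ‖x - (s n).1‖ := norm_pos_iff.mpr (sub_ne_zero.mpr (hsx n).symm)
  have hcs : -(‖w - v‖ * ‖x - (s n).1‖) ≤ inner ℝ (w - v) (x - (s n).1) :=
    (abs_le.mp (abs_real_inner_le_norm _ _)).1
  have hin := InnerProductGeometry.cos_angle_mul_norm_mul_norm v (x - (s n).1)
  rw [inner_sub_left] at hcs
  have hpos : 0 < inner ℝ w (x - (s n).1) := by
    have a1 := mul_lt_mul_of_pos_right hb' hu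
    have a2 := mul_lt_mul_of_pos_right hcn (mul_pos hvn hu)
    nlinarith
  have key : (0 : EReal) < (((∑ i, c ((![(x, y), s n] : Fin 2 → E × Y) i).1
      ((![(x, y), s n] : Fin 2 → E × Y) i).2) -
      ∑ i, c ((![(x, y), s n] : Fin 2 → E × Y) i).1
      ((![(x, y), s n] : Fin 2 → E × Y) (Equiv.swap 0 1 i)).2 : ℝ) : EReal) := by
    rw [EReal.coe_pos]
    simp only [Fin.sum_univ_two, Equiv.swap_apply_left, Equiv.swap_apply_right,
      Matrix.cons_val_zero, Matrix.cons_val_one]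
    linarith
  refine lt_of_lt_of_le key ?_
  unfold rateI
  refine le_iSup_of_le 0 (le_iSup_of_le ![(x, y), s n] (le_iSup_of_le rfl
    (le_iSup_of_le ?_ (le_iSup_of_le (Equiv.swap 0 1) le_rfl))))
  intro i hi
  fin_cases i
  · exact absurd rfl hi
  · exact hsΓ n

end Statement

end EOT
end
end

section
/- Let x be an interior point of X_0 := proj_X Γ and y ∈ Y. Suppose Γ = graph T for a transport map T: X_0 → Y which is continuous at x. If ∇_x c(x,y) − ∇_x c(x,T(x)) ≠ 0, then I(x,y) > 0. -/
open MeasureTheory Filter Topology Set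
open scoped ENNReal

noncomputable section

namespace EOT

variable {X Y : Type*}

section Statement

variable {d : ℕ} {Y : Type*} [MetricSpace Y]

local notation "E" => EuclideanSpace ℝ (Fin d)

/-- positivity of the rate function at interior points with continuous map. -/
theorem stmt13 (c : E → Y → ℝ) (hc : Continuous fun p : E × Y => c p.1 p.2)
    (hc0 : ∀ x y, 0 ≤ c x y)
    (hdiff : ∀ y, Differentiable ℝ fun x => c x y)
    (hgrad : Continuous fun p : E × Y => gradient (fun x => c x p.2) p.1)
    (Γ : Set (E × Y)) (hΓne : Γ.Nonempty) (hΓ : CCyclMonotone c Γ)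
    (T : E → Y) (hgraph : ∀ p ∈ Γ, p.2 = T p.1)
    (x : E) (hx : x ∈ interior (Prod.fst '' Γ)) (y : Y)
    (hT : ContinuousWithinAt T (Prod.fst '' Γ) x)
    (hv : gradient (fun x' => c x' y) x - gradient (fun x' => c x' (T x)) x ≠ 0) :
    0 < rateI c Γ (x, y) := by
  set w : E := gradient (fun x' => c x' y) x - gradient (fun x' => c x' (T x)) x with hw
  -- the map whose positivity near `(x, T x)` drives the argument
  have hF : Continuous fun p : E × Y =>
      inner ℝ (gradient (fun x' => c x' y) p.1 - gradient (fun x' => c x' p.2) p.1) w := by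
    have h1 : Continuous fun p : E × Y => gradient (fun x' => c x' y) p.1 :=
      hgrad.comp (continuous_fst.prodMk continuous_const)
    exact (h1.sub hgrad).inner continuous_const
  have hFx : 0 < inner ℝ (gradient (fun x' => c x' y) x - gradient (fun x' => c x' (T x)) x) w := by
    rw [← hw]
    exact real_inner_self_pos.mpr hv
  have hev : ∀ᶠ p : E × Y in 𝓝 x ×ˢ 𝓝 (T x),
      0 < inner ℝ (gradient (fun x' => c x' y) p.1 - gradient (fun x' => c x' p.2) p.1) w := by
    rw [← nhds_prod_eq]
    exact hF.continuousAt.eventually (lt_mem_nhds hFx)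
  obtain ⟨pa, ha, pb, hb, hab⟩ := eventually_prod_iff.mp hev
  have hTc : ContinuousAt T x := hT.continuousAt (mem_interior_iff_mem_nhds.mp hx)
  have hall : ∀ᶠ z in 𝓝 x, pa z ∧ pb (T z) ∧ z ∈ Prod.fst '' Γ :=
    ha.and ((hTc.eventually hb).and (mem_interior_iff_mem_nhds.mp hx))
  have hline : Tendsto (fun s : ℝ => x - s • w) (𝓝 0) (𝓝 x) := by
    have : Continuous fun s : ℝ => x - s • w := by fun_prop
    simpa using this.tendsto 0
  obtain ⟨r, hr, hball⟩ := Metric.eventually_nhds_iff.mp (hline.eventually hall)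
  have hin : ∀ s : ℝ, 0 ≤ s → s ≤ r / 2 → dist s 0 < r := by
    intro s h0 h1
    rw [Real.dist_eq, sub_zero, abs_of_nonneg h0]
    linarith
  obtain ⟨-, hb', ⟨q, hqΓ, hq1⟩⟩ := hball (hin (r / 2) (by linarith) le_rfl)
  have hq2 : q.2 = T (x - (r / 2) • w) := by rw [hgraph q hqΓ, hq1]
  set x' : E := x - (r / 2) • w with hx'
  have hder : ∀ s : ℝ, HasDerivAt (fun s : ℝ => c (x - s • w) y - c (x - s • w) (T x'))
      (-inner ℝ (gradient (fun z => c z y) (x - s • w)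
        - gradient (fun z => c z (T x')) (x - s • w)) w) s := by
    intro s
    have hl : HasDerivAt (fun s : ℝ => x - s • w) (-w) s := by
      simpa using ((hasDerivAt_id s).smul_const w).const_sub x
    have key : ∀ y₀ : Y, HasDerivAt (fun s : ℝ => c (x - s • w) y₀)
        (inner ℝ (gradient (fun z => c z y₀) (x - s • w)) (-w)) s := by
      intro y₀
      have h := ((hdiff y₀ (x - s • w)).hasGradientAt.hasFDerivAt).comp_hasDerivAt s hl
      refine HasDerivAt.congr_deriv (f := fun s : ℝ => c (x - s • w) y₀) h ?_
      simp
    have h := (key y).sub (key (T x'))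
    refine h.congr_deriv ?_
    rw [inner_sub_left, inner_neg_right, inner_neg_right]
    ring
  have hanti : StrictAntiOn (fun s : ℝ => c (x - s • w) y - c (x - s • w) (T x'))
      (Icc 0 (r / 2)) := by
    apply strictAntiOn_of_deriv_neg (convex_Icc _ _)
    · exact fun s _ => (hder s).continuousAt.continuousWithinAt
    · intro s hs
      rw [interior_Icc] at hs
      rw [(hder s).deriv, neg_lt_zero]
      exact hab (hball (hin s hs.1.le hs.2.le)).1 hb'
  have hlt := hanti (left_mem_Icc.mpr (by linarith)) (right_mem_Icc.mpr (by linarith))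
    (by linarith : (0 : ℝ) < r / 2)
  simp only [zero_smul, sub_zero] at hlt
  rw [← hx'] at hlt
  unfold rateI
  refine lt_of_lt_of_le ?_ (le_iSup_of_le 0 (le_iSup_of_le ![(x, y), q] (le_iSup_of_le rfl
    (le_iSup_of_le ?_ (le_iSup_of_le (Equiv.swap 0 1) le_rfl)))))
  · rw [EReal.coe_pos]
    simp [Fin.sum_univ_two, hq1, hq2]
    linarith
  · intro i hi
    fin_cases i
    · exact absurd rfl hi
    · exact hqΓ

end Statement

end EOT
end
end

section
/- Let c(x,y) = ‖x−y‖² on ℝ^d × ℝ^d, let X_0 := proj_X Γ be strictly convex (the open segment between any two distinct points of X_0 lies in the interior of X_0), and let (x,y) ∈ (X_0 × Y_0) \ Γ with x ∈ ∂X_0. Suppose Γ = graph T for a transport map T which is continuous on B_r(x) ∩ X_0 for some r > 0. Then I(x,y) > 0. -/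
open MeasureTheory Filter Topology Set
open scoped ENNReal

noncomputable section

namespace EOT

variable {X Y : Type*}

section Statement

variable {d : ℕ}

local notation "E" => EuclideanSpace ℝ (Fin d)

/-- positivity at boundary points for quadratic cost, strictly convex `X₀`
and continuous transport map. -/
theorem stmt14 (Γ : Set (E × E)) (hΓne : Γ.Nonempty)
    (hΓ : CCyclMonotone (fun x y : E => ‖x - y‖ ^ 2) Γ)
    (T : E → E) (hgraph : ∀ p ∈ Γ, p.2 = T p.1)
    (hstrict : ∀ x₁ ∈ Prod.fst '' Γ, ∀ x₂ ∈ Prod.fst '' Γ, x₁ ≠ x₂ →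
      openSegment ℝ x₁ x₂ ⊆ interior (Prod.fst '' Γ))
    (x y : E)
    (hxy : (x, y) ∈ ((Prod.fst '' Γ) ×ˢ (Prod.snd '' Γ)) \ Γ)
    (hxb : x ∈ frontier (Prod.fst '' Γ))
    (r : ℝ) (hr : 0 < r)
    (hT : ContinuousOn T (Metric.ball x r ∩ Prod.fst '' Γ)) :
    0 < rateI (fun x y : E => ‖x - y‖ ^ 2) Γ (x, y) := by
  classical
  obtain ⟨⟨hx0, hy0⟩, hnot⟩ := hxy
  obtain ⟨⟨x0, y0⟩, hp0, rfl⟩ := hx0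
  obtain ⟨⟨x', y'⟩, hp', rfl⟩ := hy0
  simp only at *
  have hy0T : y0 = T x0 := hgraph _ hp0
  have hy'T : y' = T x' := hgraph _ hp'
  have hTmem : ∀ w ∈ Prod.fst '' Γ, (w, T w) ∈ Γ := by
    rintro w ⟨⟨a, b⟩, h, rfl⟩
    have := hgraph _ h
    simp only at this ⊢
    rwa [← this]
  by_contra hI
  rw [not_lt] at hI
  have key : ∀ a b u v : E, ‖a - b‖ ^ 2 + ‖u - v‖ ^ 2 - (‖a - v‖ ^ 2 + ‖u - b‖ ^ 2)
      = - 2 * inner ℝ (u - a) (v - b) := by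
    intro a b u v
    simp only [@norm_sub_sq_real, inner_sub_left, inner_sub_right]
    ring
  have h1 : ∀ w ∈ Prod.fst '' Γ, 0 ≤ inner ℝ (w - x0) (T w - y') := by
    intro w hw
    have h2 : (((∑ i, (fun x y : E => ‖x - y‖ ^ 2) ((![(x0, y'), (w, T w)] : Fin 2 → E × E) i).1
        ((![(x0, y'), (w, T w)] : Fin 2 → E × E) i).2)
        - ∑ i, (fun x y : E => ‖x - y‖ ^ 2) ((![(x0, y'), (w, T w)] : Fin 2 → E × E) i).1
        ((![(x0, y'), (w, T w)] : Fin 2 → E × E) (Equiv.swap (0 : Fin 2) 1 i)).2 : ℝ) : EReal)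
        ≤ 0 := by
      refine le_trans ?_ hI
      unfold rateI
      refine le_iSup_of_le 0 (le_iSup_of_le (![(x0, y'), (w, T w)]) (le_iSup_of_le rfl
        (le_iSup_of_le ?_ (le_iSup_of_le (Equiv.swap (0 : Fin 2) 1) le_rfl))))
      intro i hi
      fin_cases i
      · exact absurd rfl hi
      · exact hTmem w hw
    have h3 := EReal.coe_nonpos.1 h2
    simp [Fin.sum_univ_two] at h3
    have := key x0 y' w (T w)
    linarith
  have h2 : ∀ w ∈ Prod.fst '' Γ, 0 ≤ inner ℝ (w - x') (T w - y') := by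
    intro w hw
    have h3 := hΓ 1 (![(x', y'), (w, T w)]) (by
      intro i
      fin_cases i
      · exact hp'
      · exact hTmem w hw)
    simp [Fin.sum_univ_two] at h3
    have := key x' y' w (T w)
    linarith
  have hx0m : x0 ∈ Prod.fst '' Γ := ⟨_, hp0, rfl⟩
  have hne : x0 ≠ x' := by
    rintro rfl
    exact hnot hp'
  have hseg := hstrict x0 hx0m x' ⟨_, hp', rfl⟩ hne
  have hz : ∀ s : ℝ, 0 < s → s < 1 → (1 - s) • x0 + s • x' ∈ Metric.ball x0 r →
      T ((1 - s) • x0 + s • x') = y' := by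
    intro s hs0 hs1 hball
    have hzi : (1 - s) • x0 + s • x' ∈ interior (Prod.fst '' Γ) :=
      hseg ⟨1 - s, s, by linarith, hs0, by ring, rfl⟩
    set z := (1 - s) • x0 + s • x' with hzdef
    have hnh : Metric.ball x0 r ∩ Prod.fst '' Γ ∈ 𝓝 z :=
      inter_mem (Metric.isOpen_ball.mem_nhds hball) (mem_interior_iff_mem_nhds.1 hzi)
    have hcont : ContinuousAt T z := hT.continuousAt hnh
    set v := y' - T z with hv
    have hc : Tendsto (fun t : ℝ => z + t • v) (𝓝[>] 0) (𝓝 z) := by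
      have : Continuous (fun t : ℝ => z + t • v) := by fun_prop
      have h := this.tendsto 0
      simp only [zero_smul, add_zero] at h
      exact h.mono_left nhdsWithin_le_nhds
    have hlim : Tendsto (fun t : ℝ => (inner ℝ v (T (z + t • v) - y') : ℝ)) (𝓝[>] 0)
        (𝓝 (inner ℝ v (T z - y'))) :=
      tendsto_const_nhds.inner ((hcont.tendsto.comp hc).sub tendsto_const_nhds)
    have hnn : (0 : ℝ) ≤ inner ℝ v (T z - y') := by
      refine ge_of_tendsto hlim ?_
      filter_upwards [hc.eventually hnh, self_mem_nhdsWithin] with t ht ht0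
      have ht0' : (0 : ℝ) < t := ht0
      have e1 := h1 _ ht.2
      have e2 := h2 _ ht.2
      have e3 : t • v = (1 - s) • (z + t • v - x0) + s • (z + t • v - x') := by
        rw [hzdef]; module
      have e4 : t * inner ℝ v (T (z + t • v) - y')
          = (1 - s) * inner ℝ (z + t • v - x0) (T (z + t • v) - y')
            + s * inner ℝ (z + t • v - x') (T (z + t • v) - y') := by
        rw [← real_inner_smul_left, ← real_inner_smul_left, ← real_inner_smul_left,
          ← inner_add_left, ← e3]
      have e5 : 0 ≤ t * inner ℝ v (T (z + t • v) - y') := by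
        rw [e4]
        have : 0 ≤ 1 - s := by linarith
        positivity
      exact nonneg_of_mul_nonneg_right e5 ht0'
    have e6 : T z - y' = -v := by rw [hv]; abel
    rw [e6, inner_neg_right, real_inner_self_eq_norm_sq] at hnn
    have e7 : ‖v‖ = 0 := by nlinarith [norm_nonneg v]
    have e8 := norm_eq_zero.1 e7
    rw [hv, sub_eq_zero] at e8
    exact e8.symm
  have hc : Tendsto (fun s : ℝ => (1 - s) • x0 + s • x') (𝓝[>] 0) (𝓝 x0) := by
    have : Continuous (fun s : ℝ => (1 - s) • x0 + s • x') := by fun_prop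
    have h := this.tendsto 0
    simp only [zero_smul, add_zero, sub_zero, one_smul] at h
    exact h.mono_left nhdsWithin_le_nhds
  have hev1 : ∀ᶠ s : ℝ in 𝓝[>] 0, s < 1 :=
    nhdsWithin_le_nhds (gt_mem_nhds one_pos)
  have hevb := hc.eventually (Metric.ball_mem_nhds x0 hr)
  have hcw : Tendsto (fun s : ℝ => (1 - s) • x0 + s • x') (𝓝[>] 0)
      (𝓝[Metric.ball x0 r ∩ Prod.fst '' Γ] x0) := by
    refine tendsto_nhdsWithin_iff.2 ⟨hc, ?_⟩
    filter_upwards [hev1, hevb, self_mem_nhdsWithin] with s hs1 hb hs0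
    have hs0' : (0 : ℝ) < s := hs0
    exact ⟨hb, interior_subset (hseg ⟨1 - s, s, by linarith, hs0', by ring, rfl⟩)⟩
  have hl := (hT x0 ⟨Metric.mem_ball_self hr, hx0m⟩).tendsto.comp hcw
  have hl2 : Tendsto (T ∘ fun s : ℝ => (1 - s) • x0 + s • x') (𝓝[>] 0) (𝓝 y') := by
    refine tendsto_const_nhds.congr' ?_
    filter_upwards [hev1, hevb, self_mem_nhdsWithin] with s hs1 hb hs0
    exact (hz s hs0 hs1 hb).symm
  have := tendsto_nhds_unique hl hl2
  apply hnot
  rw [← this, ← hy0T]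
  exact hp0

end Statement

end EOT
end
end

section
/- Let c(x,y) = ‖x−y‖² on ℝ^d × ℝ^d, suppose there is a Kantorovich potential ψ with I(x,y) = c(x,y) − ψ^c(y) + ψ(x) on X_0 × Y_0, let X_0 be strictly convex, and let (x,y) ∈ (X_0 × Y_0) \ Γ with x ∈ ∂X_0. If I(x̃,y) > 0 for all x̃ in the intersection of the interior of X_0 with some ball B_r(x), r > 0, then I(x,y) > 0. -/
open MeasureTheory Filter Topology Set
open scoped ENNReal

noncomputable section

namespace EOT

variable {X Y : Type*}

section Statement

variable {d : ℕ}

local notation "E" => EuclideanSpace ℝ (Fin d)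

/-- positivity at boundary points for quadratic cost by continuation from
the interior, given the dual representation of `I`. -/
theorem stmt15 (Γ : Set (E × E)) (hΓne : Γ.Nonempty)
    (hΓ : CCyclMonotone (fun x y : E => ‖x - y‖ ^ 2) Γ)
    (ψ : E → EReal)
    (hψ : IsKantorovichPotential (fun x y : E => ‖x - y‖ ^ 2) Γ ψ)
    (hdual : ∀ x ∈ Prod.fst '' Γ, ∀ y ∈ Prod.snd '' Γ,
      rateI (fun x y : E => ‖x - y‖ ^ 2) Γ (x, y) =
        ((‖x - y‖ ^ 2 : ℝ) : EReal) - cConj (fun x y : E => ‖x - y‖ ^ 2) ψ y + ψ x)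
    (hstrict : ∀ x₁ ∈ Prod.fst '' Γ, ∀ x₂ ∈ Prod.fst '' Γ, x₁ ≠ x₂ →
      openSegment ℝ x₁ x₂ ⊆ interior (Prod.fst '' Γ))
    (x y : E)
    (hxy : (x, y) ∈ ((Prod.fst '' Γ) ×ˢ (Prod.snd '' Γ)) \ Γ)
    (hxb : x ∈ frontier (Prod.fst '' Γ))
    (r : ℝ) (hr : 0 < r)
    (hpos : ∀ x' ∈ interior (Prod.fst '' Γ) ∩ Metric.ball x r,
      0 < rateI (fun x y : E => ‖x - y‖ ^ 2) Γ (x', y)) :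
    0 < rateI (fun x y : E => ‖x - y‖ ^ 2) Γ (x, y) := by
  obtain ⟨⟨hx, hy⟩, hnot⟩ := hxy
  have hfin : ∀ p ∈ Γ, ∃ a q : ℝ, ψ p.1 = a ∧
      cConj (fun x y : E => ‖x - y‖ ^ 2) ψ p.2 = q ∧ q - a = ‖p.1 - p.2‖ ^ 2 := by
    intro p hp
    have h := hψ.2 hp
    have hb := hψ.1.1 p.1
    simp only [cSubdiff, mem_setOf_eq] at h
    generalize cConj (fun x y : E => ‖x - y‖ ^ 2) ψ p.2 = Q at h ⊢
    generalize ψ p.1 = A at h hb ⊢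
    induction A with
    | bot => exact absurd rfl hb
    | top => rw [EReal.sub_top] at h; exact absurd h (EReal.bot_ne_coe _)
    | coe a =>
      induction Q with
      | bot => rw [EReal.bot_sub] at h; exact absurd h (EReal.bot_ne_coe _)
      | top => rw [EReal.top_sub_coe] at h; exact absurd h (EReal.top_ne_coe _)
      | coe q => exact ⟨a, q, rfl, rfl, by exact_mod_cast h⟩
  obtain ⟨⟨x1, y1⟩, hp1, rfl⟩ := hy
  obtain ⟨b, q, hb, hq, hbq⟩ := hfin _ hp1
  obtain ⟨⟨x0, y0⟩, hp0, hx0⟩ := hx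
  obtain ⟨a, -, ha, -, -⟩ := hfin _ hp0
  simp only at hx0 hb hq hbq ha hnot hpos ⊢
  subst hx0
  have hX0 : x0 ∈ Prod.fst '' Γ := ⟨_, hp0, rfl⟩
  have hX1 : x1 ∈ Prod.fst '' Γ := ⟨_, hp1, rfl⟩
  have hY1 : y1 ∈ Prod.snd '' Γ := ⟨_, hp1, rfl⟩
  have hne : x0 ≠ x1 := by rintro rfl; exact hnot hp1
  by_contra hcon
  rw [not_lt, hdual _ hX0 _ hY1, hq, ha] at hcon
  have hcon' : ‖x0 - y1‖ ^ 2 - q + a ≤ 0 := by exact_mod_cast hcon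
  obtain ⟨t, ht0, ht1, htr⟩ : ∃ t : ℝ, 0 < t ∧ t < 1 ∧ t * ‖x1 - x0‖ < r := by
    have hn : 0 < ‖x1 - x0‖ := norm_pos_iff.2 (sub_ne_zero.2 hne.symm)
    refine ⟨min (1 / 2) (r / (2 * ‖x1 - x0‖)), by positivity,
      lt_of_le_of_lt (min_le_left _ _) (by norm_num), ?_⟩
    calc _ ≤ r / (2 * ‖x1 - x0‖) * ‖x1 - x0‖ := by gcongr; exact min_le_right _ _
      _ = r / 2 := by field_simp
      _ < r := by linarith
  set x' : E := (1 - t) • x0 + t • x1 with hx'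
  have hint : x' ∈ interior (Prod.fst '' Γ) :=
    hstrict _ hX0 _ hX1 hne ⟨1 - t, t, by linarith, ht0, by ring, rfl⟩
  have hball : x' ∈ Metric.ball x0 r := by
    rw [mem_ball_iff_norm]
    have : x' - x0 = t • (x1 - x0) := by rw [hx']; module
    rw [this, norm_smul, Real.norm_of_nonneg ht0.le]
    exact htr
  have hp := hpos x' ⟨hint, hball⟩
  rw [hdual _ (interior_subset hint) _ hY1, hq] at hp
  have haff : ∀ w : E, ‖x' - w‖ ^ 2 - ‖x' - y1‖ ^ 2 =
      (1 - t) * (‖x0 - w‖ ^ 2 - ‖x0 - y1‖ ^ 2) + t * (‖x1 - w‖ ^ 2 - ‖x1 - y1‖ ^ 2) := by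
    intro w
    simp only [norm_sub_sq_real, hx', inner_add_left, real_inner_smul_left]
    ring
  obtain ⟨-, -, ζ, hζ⟩ := hψ.1
  have hle : ψ x' ≤ ((q - ‖x' - y1‖ ^ 2 : ℝ) : EReal) := by
    rw [hζ x']
    refine iSup_le fun w => ?_
    have h0 : ζ w - ((‖x0 - w‖ ^ 2 : ℝ) : EReal) ≤ (a : EReal) := by
      rw [← ha, hζ x0]
      exact le_iSup (fun w => ζ w - ((‖x0 - w‖ ^ 2 : ℝ) : EReal)) w
    have h1 : ζ w - ((‖x1 - w‖ ^ 2 : ℝ) : EReal) ≤ (b : EReal) := by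
      rw [← hb, hζ x1]
      exact le_iSup (fun w => ζ w - ((‖x1 - w‖ ^ 2 : ℝ) : EReal)) w
    generalize ζ w = Z at h0 h1 ⊢
    induction Z with
    | bot => rw [EReal.bot_sub]; exact bot_le
    | top => rw [EReal.top_sub_coe] at h0; exact absurd (top_le_iff.1 h0) (EReal.coe_ne_top _)
    | coe z =>
      have h0' : z - ‖x0 - w‖ ^ 2 ≤ a := by exact_mod_cast h0
      have h1' : z - ‖x1 - w‖ ^ 2 ≤ b := by exact_mod_cast h1
      have : z - ‖x' - w‖ ^ 2 ≤ q - ‖x' - y1‖ ^ 2 := by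
        have e0 : (1 - t) * (z - q) ≤ (1 - t) * (‖x0 - w‖ ^ 2 - ‖x0 - y1‖ ^ 2) :=
          mul_le_mul_of_nonneg_left (by linarith) (by linarith)
        have e1 : t * (z - q) ≤ t * (‖x1 - w‖ ^ 2 - ‖x1 - y1‖ ^ 2) :=
          mul_le_mul_of_nonneg_left (by linarith) ht0.le
        linarith [haff w]
      exact_mod_cast this
  have hfinal := hp.trans_le (add_le_add le_rfl hle)
  have : (0 : ℝ) < ‖x' - y1‖ ^ 2 - q + (q - ‖x' - y1‖ ^ 2) := by exact_mod_cast hfinal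
  linarith

end Statement

end EOT
end
end
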